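/- Let r ≥ 3 and q = p^h > 4 with p prime, h ≥ 1, and let V be a quasi-Hermitian variety of PG(r,q^2) whose characteristic vector v^V belongs to C_p. Let π be a plane of PG(r,q^2) with |π ∩ V| ≤ q^3 + 2q^2. Then either there exist at most q+1 distinct lines of π such that the characteristic vector of π ∩ V (as a function on the points of π with values in F_p) equals the sum of the characteristic vectors of these lines each with coefficient 1, or π ∩ V is a classical unital of π. -/

import Mathlib

/-!
Common framework: `ProjPoint F n` is the set of points of the projective space
PG(n-1, |F|) (so PG(r, q²) corresponds to `n = r + 1` and `Fintype.card F = q ^ 2`).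
Projective subspaces of projective dimension `k` are the submodules of `Fin n → F`
of `finrank` equal to `k + 1`; lines have finrank 2, planes finrank 3 and
hyperplanes finrank `n - 1 = r`.
-/

open Module Matrix

/-- The points of the projective space PG(n-1, |F|): one-dimensional subspaces
of `F^n`. -/
def ProjPoint (F : Type) [Field F] (n : ℕ) : Type :=
  {W : Submodule F (Fin n → F) // finrank F W = 1}

/-- The set of projective points lying in a given subspace `W`. -/
def pointsIn (F : Type) [Field F] (n : ℕ) (W : Submodule F (Fin n → F)) :
    Set (ProjPoint F n) :=
  {P | P.1 ≤ W}

/-- The number of points of `V` lying in the subspace `W`. -/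
noncomputable def secant (F : Type) [Field F] (n : ℕ) (V : Set (ProjPoint F n))
    (W : Submodule F (Fin n → F)) : ℕ :=
  (V ∩ pointsIn F n W).ncard

/-- The characteristic vector of a set of projective points, with values in `F_p`. -/
noncomputable def charVec (F : Type) [Field F] (p n : ℕ) (S : Set (ProjPoint F n)) :
    ProjPoint F n → ZMod p :=
  Set.indicator S 1

/-- `C_p`: the `F_p`-code spanned by the characteristic vectors of hyperplanes. -/
def hypCode (F : Type) [Field F] (p n : ℕ) :
    Submodule (ZMod p) (ProjPoint F n → ZMod p) :=
  Submodule.span (ZMod p)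
    {v | ∃ H : Submodule F (Fin n → F), finrank F H = n - 1 ∧
      v = charVec F p n (pointsIn F n H)}

/-- A quasi-Hermitian variety of PG(r, q²): it has the size of a non-singular
Hermitian variety and the same two intersection numbers with hyperplanes.
(All identities are stated multiplied through by `q² - 1`.) -/
def IsQuasiHermitian (F : Type) [Field F] (q r : ℕ)
    (V : Set (ProjPoint F (r + 1))) : Prop :=
  (V.ncard : ℤ) * ((q : ℤ) ^ 2 - 1)
      = ((q : ℤ) ^ (r + 1) + (-1) ^ r) * ((q : ℤ) ^ r - (-1) ^ r) ∧
  ∀ H : Submodule F (Fin (r + 1) → F), finrank F H = r →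
    ((secant F (r + 1) V H : ℤ) * ((q : ℤ) ^ 2 - 1)
        = ((q : ℤ) ^ r + (-1) ^ (r - 1)) * ((q : ℤ) ^ (r - 1) - (-1) ^ (r - 1)) ∨
     (secant F (r + 1) V H : ℤ) * ((q : ℤ) ^ 2 - 1)
        = ((q : ℤ) ^ 2 - 1)
          + (q : ℤ) ^ 2 * (((q : ℤ) ^ (r - 1) + (-1) ^ r) * ((q : ℤ) ^ (r - 2) - (-1) ^ r)))

/-- The zero set, in PG(n-1,|F|), of the Hermitian form `x ↦ xᵀ A x^(q)`. -/
def hermSet (F : Type) [Field F] (q n : ℕ) (A : Matrix (Fin n) (Fin n) F) :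
    Set (ProjPoint F n) :=
  {P | ∀ x ∈ P.1, ∑ i, ∑ j, x i * A i j * (x j) ^ q = 0}

/-- A non-singular Hermitian variety of PG(n-1, q²). -/
def IsNonsingHermitian (F : Type) [Field F] (q n : ℕ)
    (V : Set (ProjPoint F n)) : Prop :=
  ∃ A : Matrix (Fin n) (Fin n) F, IsUnit A.det ∧
    Aᵀ = A.map (fun a => a ^ q) ∧ V = hermSet F q n A

/-- A singular Hermitian variety of PG(n-1, q²) whose singular space (the radical
of the Hermitian form) has projective dimension `d`. -/
def IsSingularHermitian (F : Type) [Field F] (q n d : ℕ)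
    (S : Set (ProjPoint F n)) : Prop :=
  ∃ A : Matrix (Fin n) (Fin n) F,
    Aᵀ = A.map (fun a => a ^ q) ∧
    finrank F (LinearMap.ker (Matrix.toLin' Aᵀ)) = d + 1 ∧
    S = hermSet F q n A

/-- A `d`-singular quasi-Hermitian variety of PG(r, q²). -/
def IsSingularQuasiHermitian (F : Type) [Field F] (q r d : ℕ)
    (S : Set (ProjPoint F (r + 1))) : Prop :=
  ∃ S₀ : Set (ProjPoint F (r + 1)), IsSingularHermitian F q (r + 1) d S₀ ∧
    S.ncard = S₀.ncard ∧
    ∀ H : Submodule F (Fin (r + 1) → F), finrank F H = r →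
      ∃ H₀ : Submodule F (Fin (r + 1) → F), finrank F H₀ = r ∧
        secant F (r + 1) S H = secant F (r + 1) S₀ H₀

/-- `U` is a classical unital (Hermitian curve) of the plane `π` of PG(n-1, q²):
in some coordinatization `e` of `π`, it is the zero set of a non-degenerate
Hermitian form on `F³`. -/
def IsClassicalUnital (F : Type) [Field F] (q n : ℕ)
    (π : Submodule F (Fin n → F)) (U : Set (ProjPoint F n)) : Prop :=
  ∃ e : (Fin 3 → F) →ₗ[F] (Fin n → F), LinearMap.ker e = ⊥ ∧ LinearMap.range e = π ∧
    ∃ A : Matrix (Fin 3) (Fin 3) F, IsUnit A.det ∧ Aᵀ = A.map (fun a => a ^ q) ∧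
      U = {P | ∃ y : Fin 3 → F, y ≠ 0 ∧ P.1 = Submodule.span F {e y} ∧
        ∑ i, ∑ j, y i * A i j * (y j) ^ q = 0}


namespace QH
open Finset

structure PPlane {P L : Type*} [Fintype P] [DecidableEq P] [Fintype L] [DecidableEq L]
    (ln : L → Finset P) (Q : ℕ) : Prop where
  join : ∀ x y : P, x ≠ y → ∃ l, x ∈ ln l ∧ y ∈ ln l
  meet : ∀ l m : L, ∃ x, x ∈ ln l ∧ x ∈ ln m
  uniq : ∀ (x y : P) (l m : L), x ≠ y → x ∈ ln l → y ∈ ln l → x ∈ ln m → y ∈ ln m → l = m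
  cardl : ∀ l, (ln l).card = Q + 1
  cardt : ∀ x : P, (univ.filter (fun l => x ∈ ln l)).card = Q + 1

def IB {P L : Type*} [DecidableEq P] (ln : L → Finset P) (Q : ℕ) (S : Finset P) : Prop :=
  ∀ (T : P) (n m : L), T ∉ S → T ∈ ln n → T ∈ ln m → n ≠ m →
    (S ∩ ln n).card * (Q + 1) + (S ∩ ln m).card ≤ S.card + (S ∩ ln n).card * (S ∩ ln n).card

section comb
variable {P L : Type*} [Fintype P] [DecidableEq P] [Fintype L] [DecidableEq L]
  {ln : L → Finset P} {Q : ℕ}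

theorem PPlane.join_card (H : PPlane ln Q) {x y : P} (h : x ≠ y) :
    ((univ.filter (fun l => x ∈ ln l)).filter (fun l => y ∈ ln l)).card = 1 := by
  obtain ⟨l, h1, h2⟩ := H.join x y h
  rw [Finset.card_eq_one]
  refine ⟨l, ?_⟩
  ext m
  simp only [mem_filter, mem_univ, true_and, mem_singleton]
  constructor
  · rintro ⟨h3, h4⟩
    exact H.uniq x y m l h h3 h4 h1 h2
  · rintro rfl
    exact ⟨h1, h2⟩

theorem PPlane.sum_not_mem (H : PPlane ln Q) (x : P) (S : Finset P) (hx : x ∉ S) :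
    ∑ l ∈ univ.filter (fun l => x ∈ ln l), (S ∩ ln l).card = S.card := by
  have h1 : ∀ l, (S ∩ ln l).card = ∑ y ∈ S, if y ∈ ln l then 1 else 0 := by
    intro l
    rw [Finset.card_eq_sum_ones, ← Finset.filter_mem_eq_inter, Finset.sum_filter]
  simp_rw [h1]
  rw [Finset.sum_comm]
  rw [Finset.card_eq_sum_ones]
  apply Finset.sum_congr rfl
  intro y hy
  rw [← Finset.sum_filter, ← Finset.card_eq_sum_ones]
  apply H.join_card
  rintro rfl
  exact hx hy

theorem PPlane.sum_mem (H : PPlane ln Q) (x : P) (S : Finset P) (hx : x ∈ S) :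
    ∑ l ∈ univ.filter (fun l => x ∈ ln l), (S ∩ ln l).card = S.card + Q := by
  have h1 := H.sum_not_mem x (S.erase x) (Finset.notMem_erase x S)
  have h2 : ∀ l ∈ univ.filter (fun l => x ∈ ln l), (S ∩ ln l).card = (S.erase x ∩ ln l).card + 1 := by
    intro l hl
    simp only [mem_filter, mem_univ, true_and] at hl
    rw [Finset.erase_inter, Finset.card_erase_add_one]
    simp [hx, hl]
  rw [Finset.sum_congr rfl h2, Finset.sum_add_distrib, h1, Finset.sum_const, H.cardt]
  have := Finset.card_erase_add_one hx
  simp; omega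

theorem PPlane.exists_other (H : PPlane ln Q) (hQ : 1 ≤ Q) (x : P) (l : L) : ∃ m, x ∈ ln m ∧ l ≠ m := by
  have h := H.cardt x
  have h1 : 1 < (univ.filter (fun l => x ∈ ln l)).card := by omega
  obtain ⟨m, hm, hml⟩ := Finset.exists_mem_ne h1 l
  simp only [mem_filter, mem_univ, true_and] at hm
  exact ⟨m, hm, hml.symm⟩

theorem PPlane.exists_notMem (H : PPlane ln Q) (S : Finset P) (l : L) (h : (S ∩ ln l).card ≤ Q) :
    ∃ T, T ∈ ln l ∧ T ∉ S := by
  by_contra! hc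
  have : S ∩ ln l = ln l := by
    apply Finset.inter_eq_right.2
    exact fun x hx => hc x hx
  rw [this, H.cardl] at h
  omega

theorem lemG (H : PPlane ln Q) {q : ℕ} (hQ : Q = q ^ 2) (hq : 2 ≤ q) (S : Finset P) (hS : IB ln Q S)
    (R : P) (hR : R ∈ S) : ∃ n, R ∈ ln n ∧ q + 1 ≤ (S ∩ ln n).card := by
  by_contra! hc
  have hne : (univ.filter (fun l => R ∈ ln l)).Nonempty := by
    rw [← Finset.card_pos, H.cardt]; omega
  obtain ⟨n, hn, hmax⟩ := Finset.exists_max_image _ (fun l => (S ∩ ln l).card) hne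
  simp only [mem_filter, mem_univ, true_and] at hn hmax
  have hs := hc n hn
  set s := (S ∩ ln n).card with hsdef
  have hqQ : q < Q := by rw [hQ]; nlinarith
  obtain ⟨T, hT, hTS⟩ := H.exists_notMem S n (by omega)
  have hsum := H.sum_mem R S hR
  have hle : ∑ l ∈ univ.filter (fun l => R ∈ ln l), (S ∩ ln l).card ≤ (Q + 1) * s := by
    rw [← H.cardt R, ← smul_eq_mul]
    apply Finset.sum_le_card_nsmul
    intro l hl
    simp only [mem_filter, mem_univ, true_and] at hl
    exact hmax l hl
  have hs1 : 1 ≤ s := by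
    apply Finset.card_pos.2
    exact ⟨R, by simp [hR, hn]⟩
  by_cases hsub : S ⊆ ln n
  · obtain ⟨m, hm, hnm⟩ := H.exists_other (by omega) T n
    have := hS T n m hTS hT hm hnm
    rw [Finset.inter_eq_left.2 hsub] at hsdef
    rw [Finset.inter_eq_left.2 hsub, ← hsdef] at this
    nlinarith
  · obtain ⟨y, hy, hyn⟩ := Finset.not_subset.1 hsub
    have hTy : T ≠ y := by rintro rfl; exact hyn hT
    obtain ⟨m, hm, hym⟩ := H.join T y hTy
    have := hS T n m hTS hT hm (by rintro rfl; exact hyn hym)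
    rw [← hsdef] at this
    have h1 : 1 ≤ (S ∩ ln m).card := Finset.card_pos.2 ⟨y, by simp [hy, hym]⟩
    nlinarith

theorem big_of_short (H : PPlane ln Q) {q : ℕ} (hQ : Q = q ^ 2) (hq : 2 ≤ q) (S : Finset P)
    (hS : IB ln Q S) (hne : S.Nonempty) (hsh : ∀ l, (S ∩ ln l).card + q ≤ Q) :
    (q + 1) * (Q - q) ≤ S.card := by
  obtain ⟨R, hR⟩ := hne
  obtain ⟨n, hn, hs⟩ := lemG H hQ hq S hS R hR
  have h2 := hsh n
  obtain ⟨T, hT, hTS⟩ := H.exists_notMem S n (by omega)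
  obtain ⟨m, hm, hnm⟩ := H.exists_other (by omega) T n
  have := hS T n m hTS hT hm hnm
  set s := (S ∩ ln n).card with hsdef
  obtain ⟨d, hd⟩ := Nat.exists_eq_add_of_le h2
  obtain ⟨e, he⟩ := Nat.exists_eq_add_of_le hs
  have : Q - q = s + d := by omega
  rw [this]
  have : Q = s + q + d := by omega
  nlinarith

theorem PPlane.sum_lines (H : PPlane ln Q) (S : Finset P) :
    ∑ l, (S ∩ ln l).card = S.card * (Q + 1) := by
  have h1 : ∀ l, (S ∩ ln l).card = ∑ y ∈ S, if y ∈ ln l then 1 else 0 := by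
    intro l
    rw [Finset.card_eq_sum_ones, ← Finset.filter_mem_eq_inter, Finset.sum_filter]
  simp_rw [h1]
  rw [Finset.sum_comm, ← smul_eq_mul]
  apply Finset.sum_eq_card_nsmul
  intro y hy
  rw [← Finset.sum_filter, ← Finset.card_eq_sum_ones, H.cardt]

theorem PPlane.sum_lines_sq (H : PPlane ln Q) (S : Finset P) :
    ∑ l, (S ∩ ln l).card * (S ∩ ln l).card = S.card * (S.card + Q) := by
  have h1 : ∀ l, (S ∩ ln l).card * (S ∩ ln l).card
      = ∑ y ∈ S, if y ∈ ln l then (S ∩ ln l).card else 0 := by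
    intro l
    rw [← Finset.sum_filter, Finset.filter_mem_eq_inter, Finset.sum_const, smul_eq_mul]
  simp_rw [h1]
  rw [Finset.sum_comm, ← smul_eq_mul]
  apply Finset.sum_eq_card_nsmul
  intro y hy
  rw [← Finset.sum_filter, H.sum_mem y S hy]

theorem PPlane.card_lines (H : PPlane ln Q) [Nonempty L] : Fintype.card L = Q ^ 2 + Q + 1 := by
  obtain ⟨l⟩ := ‹Nonempty L›
  have h1 := H.sum_lines (ln l)
  rw [H.cardl, ← Finset.add_sum_erase _ _ (mem_univ l), Finset.inter_self, H.cardl] at h1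
  have h2 : ∑ x ∈ univ.erase l, (ln l ∩ ln x).card = (univ.erase l).card • 1 := by
    apply Finset.sum_eq_card_nsmul
    intro m hm
    obtain ⟨x, hx1, hx2⟩ := H.meet l m
    rw [Finset.card_eq_one]
    refine ⟨x, ?_⟩
    ext y
    simp only [mem_inter, mem_singleton]
    constructor
    · rintro ⟨h3, h4⟩
      by_contra hxy
      exact (Finset.ne_of_mem_erase hm) (H.uniq y x m l hxy h4 hx2 h3 hx1)
    · rintro rfl
      exact ⟨hx1, hx2⟩
  rw [h2, Finset.card_erase_of_mem (mem_univ l), smul_eq_mul, mul_one, Finset.card_univ] at h1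
  have : 0 < Fintype.card L := Fintype.card_pos_iff.2 ⟨l⟩
  obtain ⟨k, hk⟩ := Nat.exists_eq_add_of_le this
  rw [hk] at h1 ⊢
  simp at h1
  nlinarith

end comb
end QH

namespace QH
open Finset
section comb
variable {P L : Type*} [Fintype P] [DecidableEq P] [Fintype L] [DecidableEq L]
  {ln : L → Finset P} {Q : ℕ}

theorem case1 [Nonempty L] (H : PPlane ln Q) {q : ℕ} (hQ : Q = q ^ 2) (hq : 4 < q) (B : Finset P)
    (hB : IB ln Q B) (hnq : ∀ l, (B ∩ ln l).card ≠ q) (hsh : ∀ l, (B ∩ ln l).card ≤ q + 1)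
    (hpos : ∀ l, 1 ≤ (B ∩ ln l).card) :
    B.card = q ^ 3 + 1 ∧ ∀ l, (B ∩ ln l).card = 1 ∨ (B ∩ ln l).card = q + 1 := by
  have hqQ : 5 * q ≤ Q := by rw [hQ]; nlinarith
  obtain ⟨l0⟩ := ‹Nonempty L›
  obtain ⟨R0, hR0⟩ := Finset.card_pos.1 (hpos l0)
  have hR0B : R0 ∈ B := (Finset.mem_inter.1 hR0).1
  obtain ⟨n, hn, hsn⟩ := lemG H hQ (by omega) B hB R0 hR0B
  have hsn : (B ∩ ln n).card = q + 1 := le_antisymm (hsh n) hsn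
  obtain ⟨T, hT, hTB⟩ := H.exists_notMem B n (by omega)
  obtain ⟨m, hm, hnm⟩ := H.exists_other (by omega) T n
  have h1 := hB T n m hTB hT hm hnm
  rw [hsn] at h1
  have hw1 : q ^ 3 + 1 ≤ B.card + q := by
    have := hpos m
    rw [hQ] at h1
    nlinarith
  have hRex : ∃ R ∈ B, R ∉ ln n := by
    by_contra! hc
    rw [Finset.inter_eq_left.2 hc] at hsn
    nlinarith
  obtain ⟨R, hR, hRn⟩ := hRex
  set A := univ.filter (fun l => R ∈ ln l ∧ (B ∩ ln l).card = q + 1) with hA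
  have hk : q + 1 < A.card := by
    have hsum := H.sum_mem R B hR
    have hle : ∑ l ∈ univ.filter (fun l => R ∈ ln l), (B ∩ ln l).card ≤
        ∑ l ∈ univ.filter (fun l => R ∈ ln l), ((q - 1) + if (B ∩ ln l).card = q + 1 then 2 else 0) := by
      apply Finset.sum_le_sum
      intro l _
      have h3 := hsh l
      have h4 := hnq l
      split_ifs <;> omega
    rw [Finset.sum_add_distrib, Finset.sum_const, H.cardt, ← Finset.sum_filter,
      Finset.filter_filter, ← hA, Finset.sum_const, hsum] at hle
    simp only [smul_eq_mul] at hle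
    obtain ⟨q', rfl⟩ : ∃ q', q = q' + 1 := ⟨q - 1, by omega⟩
    simp only [Nat.add_sub_cancel] at hle
    rw [hQ] at hle
    nlinarith
  have hex : ∃ l ∈ A, ∃ T', T' ∈ ln l ∧ T' ∈ ln n ∧ T' ∉ B := by
    by_contra! hc
    choose f hf1 hf2 using fun l => H.meet l n
    have hmaps : ∀ l ∈ A, f l ∈ B ∩ ln n := fun l hl => by
      simp [hf2 l, hc l hl (f l) (hf1 l) (hf2 l)]
    obtain ⟨l1, hl1, l2, hl2, hne, heq⟩ :=
      Finset.exists_ne_map_eq_of_card_lt_of_maps_to (by rw [hsn]; exact hk) hmaps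
    rw [hA, Finset.mem_filter] at hl1 hl2
    refine hne (H.uniq R (f l1) l1 l2 ?_ hl1.2.1 (hf1 l1) hl2.2.1 (by rw [heq]; exact hf1 l2))
    intro h
    exact hRn (by rw [h]; exact hf2 l1)
  obtain ⟨l, hl, T', hT1, hT2, hT3⟩ := hex
  rw [hA, Finset.mem_filter] at hl
  have h2 := hB T' n l hT3 hT2 hT1 (by rintro rfl; exact hRn hl.2.1)
  rw [hsn, hl.2.2] at h2
  have hw2 : q ^ 3 + 1 ≤ B.card := by
    rw [hQ] at h2
    nlinarith
  have hnn : ∀ l ∈ (univ : Finset L), (0 : ℤ) ≤ (((B ∩ ln l).card : ℤ) - 1) * (q + 1 - (B ∩ ln l).card) := by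
    intro l _
    have h3 := hpos l
    have h4 := hsh l
    apply mul_nonneg
    · have : (1 : ℤ) ≤ ((B ∩ ln l).card : ℤ) := by exact_mod_cast h3
      linarith
    · have : ((B ∩ ln l).card : ℤ) ≤ q + 1 := by exact_mod_cast h4
      linarith
  have hS1 : (∑ l, ((B ∩ ln l).card : ℤ)) = B.card * (Q + 1) := by exact_mod_cast H.sum_lines B
  have hS2 : (∑ l, ((B ∩ ln l).card : ℤ) * ((B ∩ ln l).card : ℤ)) = B.card * (B.card + Q) := by
    exact_mod_cast H.sum_lines_sq B
  have hq' : (5 : ℤ) ≤ q := by exact_mod_cast hq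
  have hw3 : (q : ℤ) ^ 3 + 1 ≤ B.card := by exact_mod_cast hw2
  have h5 : (q : ℤ) ^ 2 + q + 1 < B.card := by nlinarith
  have hsumE : ∑ l, (((B ∩ ln l).card : ℤ) - 1) * (q + 1 - (B ∩ ln l).card) =
      - ((B.card - ((q : ℤ) ^ 3 + 1)) * (B.card - ((q : ℤ) ^ 2 + q + 1))) := by
    have e : ∀ l, (((B ∩ ln l).card : ℤ) - 1) * (q + 1 - (B ∩ ln l).card) =
       (q + 2) * ((B ∩ ln l).card : ℤ) - ((B ∩ ln l).card : ℤ) * ((B ∩ ln l).card : ℤ) - (q + 1) := by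
      intro l; ring
    simp_rw [e]
    haveI : Nonempty L := ⟨l0⟩
    rw [Finset.sum_sub_distrib, Finset.sum_sub_distrib, ← Finset.mul_sum, hS1, hS2,
      Finset.sum_const, Finset.card_univ, H.card_lines, hQ]
    push_cast
    simp only [nsmul_eq_mul]
    push_cast
    ring
  have hsum : ∑ l, (((B ∩ ln l).card : ℤ) - 1) * (q + 1 - (B ∩ ln l).card) ≤ 0 := by
    rw [hsumE]
    have h6 := mul_nonneg (sub_nonneg.2 hw3) (sub_nonneg.2 h5.le)
    linarith
  have h0 := le_antisymm hsum (Finset.sum_nonneg hnn)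
  have hcard : B.card = q ^ 3 + 1 := by
    rw [hsumE] at h0
    rcases mul_eq_zero.1 (neg_eq_zero.1 h0) with h | h
    · have : (B.card : ℤ) = (q : ℤ) ^ 3 + 1 := by linarith
      exact_mod_cast this
    · linarith
  rw [Finset.sum_eq_zero_iff_of_nonneg hnn] at h0
  refine ⟨hcard, ?_⟩
  intro l
  have h7 := h0 l (mem_univ l)
  rcases mul_eq_zero.1 h7 with h | h
  · left; have : ((B ∩ ln l).card : ℤ) = 1 := by linarith
    exact_mod_cast this
  · right; have : ((B ∩ ln l).card : ℤ) = q + 1 := by linarith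
    exact_mod_cast this

end comb
end QH

namespace QH
open Finset
section comb
variable {P L : Type*} [Fintype P] [DecidableEq P] [Fintype L] [DecidableEq L]
  {ln : L → Finset P} {Q : ℕ}

theorem case2a (H : PPlane ln Q) {q : ℕ} (hQ : Q = q ^ 2) (hq : 4 < q) (B : Finset P)
    (hB : IB ln Q B) (hnq : ∀ l, (B ∩ ln l).card ≠ q) (l0 : L) (hl0 : Q ≤ (B ∩ ln l0).card + q + 1)
    (hB0 : IB ln Q ((B \ ln l0) ∪ (ln l0 \ B)))
    (R : P) (hRB : R ∈ B) (hR : ∀ l, R ∈ ln l → (B ∩ ln l).card ≤ q + 1) : False := by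
  have hqQ : 5 * q ≤ Q := by rw [hQ]; nlinarith
  have hRl : R ∉ ln l0 := by
    intro h
    have := hR l0 h
    omega
  have hw : B.card ≤ Q * q + q + 1 := by
    have hsum := H.sum_mem R B hRB
    have hle : ∑ l ∈ univ.filter (fun l => R ∈ ln l), (B ∩ ln l).card ≤ (Q + 1) * (q + 1) := by
      rw [← H.cardt R, ← smul_eq_mul]
      apply Finset.sum_le_card_nsmul
      intro l hl
      simp only [mem_filter, mem_univ, true_and] at hl
      exact hR l hl
    nlinarith
  obtain ⟨n, hn, hs⟩ := lemG H hQ (by omega) _ hB0 R (by simp [hRB, hRl])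
  have hnl : n ≠ l0 := by rintro rfl; exact hRl hn
  obtain ⟨x, hxn, hxl⟩ := H.meet n l0
  have hu : ∀ y, y ∈ ln n → y ∈ ln l0 → y = x := by
    intro y h1 h2
    by_contra h
    exact hnl (H.uniq y x n l0 h h1 hxn h2 hxl)
  have hsn := hR n hn
  by_cases hxB : x ∈ B
  · have hsub : ((B \ ln l0) ∪ (ln l0 \ B)) ∩ ln n ⊆ (B ∩ ln n).erase x := by
      intro y hy
      simp only [mem_inter, mem_union, mem_sdiff] at hy
      obtain ⟨h1 | h1, h2⟩ := hy
      · simp only [mem_erase, mem_inter]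
        refine ⟨?_, h1.1, h2⟩
        rintro rfl
        exact h1.2 hxl
      · exact absurd hxB (by rw [← hu y h2 h1.1]; exact h1.2)
    have h3 := Finset.card_le_card hsub
    have h4 := Finset.card_erase_add_one (show x ∈ B ∩ ln n by simp [hxB, hxn])
    omega
  · have hsub : ((B \ ln l0) ∪ (ln l0 \ B)) ∩ ln n ⊆ insert x (B ∩ ln n) := by
      intro y hy
      simp only [mem_inter, mem_union, mem_sdiff] at hy
      obtain ⟨h1 | h1, h2⟩ := hy
      · simp [h1.1, h2]
      · simp [hu y h2 h1.1]
    have h3 := (Finset.card_le_card hsub).trans (Finset.card_insert_le _ _)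
    have h4 := hnq n
    have h5 : (B ∩ ln n).card = q + 1 := by omega
    have h6 := hB x n l0 hxB hxn hxl hnl
    rw [h5] at h6
    subst hQ
    nlinarith

theorem PPlane.inter_le (H : PPlane ln Q) {l m : L} (h : l ≠ m) : (ln l ∩ ln m).card ≤ 1 := by
  rw [Finset.card_le_one]
  intro a ha b hb
  simp only [mem_inter] at ha hb
  by_contra hab
  exact h (H.uniq a b l m hab ha.1 hb.1 ha.2 hb.2)

theorem PPlane.inter_biUnion_le (H : PPlane ln Q) {l : L} (J : Finset L) (h : l ∉ J) :
    (ln l ∩ J.biUnion ln).card ≤ J.card := by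
  rw [Finset.inter_biUnion]
  refine (Finset.card_biUnion_le).trans ?_
  rw [Finset.card_eq_sum_ones]
  apply Finset.sum_le_sum
  intro m hm
  apply H.inter_le
  rintro rfl
  exact h hm

theorem PPlane.long_count (H : PPlane ln Q) (B : Finset P) (a : ℕ) (J : Finset L)
    (hJ : ∀ l ∈ J, a ≤ (B ∩ ln l).card) :
    J.card * a ≤ (B ∩ J.biUnion ln).card + J.card.choose 2 := by
  induction J using Finset.induction_on with
  | empty => simp
  | insert l J hl ih =>
    have h1 := ih (fun m hm => hJ m (Finset.mem_insert_of_mem hm))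
    have h2 := hJ l (Finset.mem_insert_self _ _)
    rw [Finset.card_insert_of_notMem hl, Finset.biUnion_insert, Finset.inter_union_distrib_left]
    have h3 := Finset.card_union_add_card_inter (B ∩ ln l) (B ∩ J.biUnion ln)
    have h4 : ((B ∩ ln l) ∩ (B ∩ J.biUnion ln)).card ≤ J.card := by
      refine (Finset.card_le_card ?_).trans (H.inter_biUnion_le J hl)
      intro x hx
      simp only [mem_inter] at hx ⊢
      exact ⟨hx.1.2, hx.2.2⟩
    have h5 : (J.card + 1).choose 2 = J.card.choose 2 + J.card := by
      rw [Nat.choose_succ_succ' J.card 1, Nat.choose_one_right]; ring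
    rw [h5, add_mul]
    omega

theorem k_bound (H : PPlane ln Q) {q : ℕ} (hQ : Q = q ^ 2) (hq : 4 < q) (hq6 : q ≠ 6)
    (B : Finset P) (S : Finset L)
    (hS : ∀ l ∈ S, Q ≤ (B ∩ ln l).card + q + 1)
    (hS5 : q = 5 → ∀ l ∈ S, 21 ≤ (B ∩ ln l).card)
    (hw : B.card ≤ q ^ 3 + 2 * q ^ 2) : S.card ≤ q + 5 := by
  by_contra! hc
  obtain ⟨J, hJS, hJ⟩ := Finset.exists_subset_card_eq (show q + 6 ≤ S.card by omega)
  have hle : (B ∩ J.biUnion ln).card ≤ B.card := Finset.card_le_card Finset.inter_subset_left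
  by_cases h5 : q = 5
  · have := H.long_count B 21 J (fun l hl => hS5 h5 l (hJS hl))
    rw [hJ] at this
    subst h5
    norm_num [Nat.choose_two_right] at this hw
    omega
  · have := H.long_count B (Q - q - 1) J (fun l hl => by have := hS l (hJS hl); omega)
    rw [hJ] at this
    have h7 : 7 ≤ q := by omega
    have h8 : (q + 6).choose 2 * 2 = (q + 6) * (q + 5) := by
      rw [Nat.choose_two_right]
      have : 2 ∣ (q + 6) * (q + 6 - 1) := (Nat.even_mul_pred_self _).two_dvd
      rw [Nat.div_mul_cancel this]
      rfl
    have hqq : 7 * q ≤ Q := by rw [hQ]; nlinarith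
    obtain ⟨a, ha⟩ : ∃ a, Q = a + q + 1 := ⟨Q - q - 1, by omega⟩
    have h9 : Q - q - 1 = a := by omega
    rw [h9] at this
    have ha' : (a : ℤ) = q ^ 2 - q - 1 := by
      have : (Q : ℤ) = a + q + 1 := by exact_mod_cast ha
      rw [hQ] at this
      push_cast at this
      linarith
    have h10 : (((q + 6) * a : ℕ) : ℤ) * 2 ≤ ((q ^ 3 + 2 * q ^ 2 : ℕ) : ℤ) * 2 + (((q + 6) * (q + 5) : ℕ) : ℤ) := by
      rw [← h8]
      push_cast
      have h11 : (((q + 6) * a : ℕ) : ℤ) ≤ ((q ^ 3 + 2 * q ^ 2 : ℕ) : ℤ) + (((q + 6).choose 2 : ℕ) : ℤ) := by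
        exact_mod_cast this.trans (by omega)
      push_cast at h11
      linarith
    push_cast at h10
    rw [ha'] at h10
    have h7' : (7 : ℤ) ≤ q := by exact_mod_cast h7
    nlinarith

end comb
end QH

namespace QH
open Finset
section comb
variable {P L : Type*} [Fintype P] [DecidableEq P] [Fintype L] [DecidableEq L]
  {ln : L → Finset P} {Q : ℕ}

def ind (K : Type*) [Field K] (S : Finset P) : P → K := fun x => if x ∈ S then 1 else 0

open Classical in
noncomputable def supp {K : Type*} [Field K] (c : P → K) : Finset P := univ.filter (fun x => c x ≠ 0)

theorem mem_supp {K : Type*} [Field K] (c : P → K) (x : P) : x ∈ supp c ↔ c x ≠ 0 := by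
  simp [supp]

theorem supp_ind {K : Type*} [Field K] (S : Finset P) : supp (ind K S) = S := by
  ext x; simp [mem_supp, ind]

/-- number of lines of `S` through `x` -/
def mult (ln : L → Finset P) (S : Finset L) (x : P) : ℕ := (S.filter (fun l => x ∈ ln l)).card

theorem sum_ind_apply {K : Type*} [Field K] (S : Finset L) (x : P) :
    (∑ l ∈ S, ind K (ln l)) x = (mult ln S x : K) := by
  simp [mult, ind, Finset.sum_apply]

theorem sum_mult (S : Finset L) (E : Finset P) : ∑ x ∈ E, mult ln S x = ∑ l ∈ S, (E ∩ ln l).card := by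
  have h1 : ∀ l, (E ∩ ln l).card = ∑ y ∈ E, if y ∈ ln l then 1 else 0 := by
    intro l
    rw [Finset.card_eq_sum_ones, ← Finset.filter_mem_eq_inter, Finset.sum_filter]
  simp_rw [h1, mult, Finset.card_eq_sum_ones, Finset.sum_filter]
  rw [Finset.sum_comm]

/-- points of `l ∈ S` on other lines of `S` -/
theorem PPlane.mult_two_le (H : PPlane ln Q) (S : Finset L) (l : L) (hl : l ∈ S) :
    ((ln l).filter (fun x => 2 ≤ mult ln S x)).card + 1 ≤ S.card := by
  have h1 := H.inter_biUnion_le (S.erase l) (Finset.notMem_erase l S)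
  have h2 := Finset.card_erase_add_one hl
  have h3 : ((ln l).filter (fun x => 2 ≤ mult ln S x)) ⊆ ln l ∩ (S.erase l).biUnion ln := by
    intro x hx
    simp only [mem_filter] at hx
    simp only [mem_inter, mem_biUnion]
    refine ⟨hx.1, ?_⟩
    have h4 := hx.2
    rw [mult] at h4
    obtain ⟨m, hm, hml⟩ := Finset.exists_mem_ne (show 1 < _ from h4) l
    simp only [mem_filter] at hm
    exact ⟨m, Finset.mem_erase.2 ⟨hml, hm.1⟩, hm.2⟩
  have := Finset.card_le_card h3
  omega

theorem bad_zero {K : Type*} [Field K] (H : PPlane ln Q) {q : ℕ} (hQ : Q = q ^ 2) (hq : 4 < q)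
    (B : Finset P) (S : Finset L) (hS : ∀ l ∈ S, Q ≤ (B ∩ ln l).card + q + 1)
    (hk : S.card ≤ q + 5) (hcov : ∀ x ∈ B, 1 ≤ mult ln S x)
    (hIB : IB ln Q (supp (ind K B - ∑ l ∈ S, ind K (ln l)))) :
    ind K B = ∑ l ∈ S, ind K (ln l) := by
  have hqQ : 5 * q ≤ Q := by rw [hQ]; nlinarith
  set D := supp (ind K B - ∑ l ∈ S, ind K (ln l)) with hD
  have hmem : ∀ x ∈ D, (x ∉ B ∧ 1 ≤ mult ln S x) ∨ (x ∈ B ∧ 2 ≤ mult ln S x) := by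
    intro x hx
    rw [hD, mem_supp, Pi.sub_apply, sum_ind_apply] at hx
    by_cases hxB : x ∈ B
    · right
      refine ⟨hxB, ?_⟩
      have h1 := hcov x hxB
      by_contra hc
      have h2 : mult ln S x = 1 := by omega
      rw [h2] at hx
      simp [ind, hxB] at hx
    · left
      refine ⟨hxB, ?_⟩
      by_contra hc
      have h2 : mult ln S x = 0 := by omega
      rw [h2] at hx
      simp [ind, hxB] at hx
  have hmiss : ∀ l ∈ S, (ln l \ B).card ≤ q + 2 := by
    intro l hl
    have h1 := hS l hl
    have h2 := Finset.card_sdiff_add_card_inter (ln l) B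
    rw [H.cardl, Finset.inter_comm] at h2
    omega
  rcases D.eq_empty_or_nonempty with h0 | hne
  · funext x
    by_contra hx
    have : x ∈ D := by
      rw [hD, mem_supp, Pi.sub_apply]
      exact sub_ne_zero.2 hx
    rw [h0] at this
    simp at this
  exfalso
  have hsh : ∀ l, (D ∩ ln l).card + q ≤ Q := by
    intro l
    by_cases hl : l ∈ S
    · have h1 : D ∩ ln l ⊆ (ln l \ B) ∪ ((ln l).filter (fun x => 2 ≤ mult ln S x)) := by
        intro x hx
        simp only [mem_inter] at hx
        simp only [mem_union, mem_sdiff, mem_filter]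
        rcases hmem x hx.1 with h | h
        · exact Or.inl ⟨hx.2, h.1⟩
        · exact Or.inr ⟨hx.2, h.2⟩
      have h2 := (Finset.card_le_card h1).trans (Finset.card_union_le _ _)
      have h3 := H.mult_two_le S l hl
      have h4 := hmiss l hl
      omega
    · have h1 : D ∩ ln l ⊆ ln l ∩ S.biUnion ln := by
        intro x hx
        simp only [mem_inter] at hx
        simp only [mem_inter, mem_biUnion]
        refine ⟨hx.2, ?_⟩
        have h2 : 0 < mult ln S x := by rcases hmem x hx.1 with h | h <;> omega
        obtain ⟨m, hm⟩ := Finset.card_pos.1 h2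
        simp only [mem_filter] at hm
        exact ⟨m, hm⟩
      have h2 := (Finset.card_le_card h1).trans (H.inter_biUnion_le S hl)
      omega
  have hbig := big_of_short H hQ (by omega) D hIB hne hsh
  have hD1 : (D \ B).card ≤ S.card * (q + 2) := by
    have h1 : D \ B ⊆ S.biUnion (fun l => ln l \ B) := by
      intro x hx
      simp only [mem_sdiff] at hx
      have h2 : 0 < mult ln S x := by rcases hmem x hx.1 with h | h <;> omega
      obtain ⟨m, hm⟩ := Finset.card_pos.1 h2
      simp only [mem_filter] at hm
      simp only [mem_biUnion, mem_sdiff]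
      exact ⟨m, hm.1, hm.2, hx.2⟩
    refine (Finset.card_le_card h1).trans (Finset.card_biUnion_le.trans ?_)
    rw [← smul_eq_mul]
    exact Finset.sum_le_card_nsmul _ _ _ hmiss
  have hD2 : (D ∩ B).card * 2 ≤ S.card * (S.card - 1) := by
    have h1 : (D ∩ B).card * 2 ≤ ∑ x ∈ D ∩ B, mult ln S x := by
      rw [← smul_eq_mul]
      apply Finset.card_nsmul_le_sum
      intro x hx
      simp only [mem_inter] at hx
      rcases hmem x hx.1 with h | h
      · exact absurd hx.2 h.1
      · exact h.2
    refine h1.trans ?_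
    rw [sum_mult, ← smul_eq_mul]
    apply Finset.sum_le_card_nsmul
    intro l hl
    have h3 := H.mult_two_le S l hl
    have h4 : (D ∩ B) ∩ ln l ⊆ (ln l).filter (fun x => 2 ≤ mult ln S x) := by
      intro x hx
      simp only [mem_inter] at hx
      simp only [mem_filter]
      rcases hmem x hx.1.1 with h | h
      · exact absurd hx.1.2 h.1
      · exact ⟨hx.2, h.2⟩
    have := Finset.card_le_card h4
    omega
  have hD3 := Finset.card_sdiff_add_card_inter D B
  have hk1 : S.card * (q + 2) ≤ (q + 5) * (q + 2) := Nat.mul_le_mul_right _ hk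
  have hk2 : S.card * (S.card - 1) ≤ (q + 5) * (q + 4) := Nat.mul_le_mul hk (by omega)
  have hqq : Q - q = q * (q - 1) := by rw [hQ, Nat.mul_sub]; simp [pow_two]
  rw [hqq] at hbig
  obtain ⟨t, rfl⟩ : ∃ t, q = t + 5 := ⟨q - 5, by omega⟩
  have : t + 5 - 1 = t + 4 := by omega
  rw [this] at hbig
  nlinarith

theorem k_final {K : Type*} [Field K] {p : ℕ} [CharP K p] (H : PPlane ln Q) {q : ℕ} (hQ : Q = q ^ 2) (hq : 4 < q)
    (hpq : p ∣ q)
    (B : Finset P) (S : Finset L) (hSne : S.Nonempty)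
    (hsh : ∀ l ∉ S, (B ∩ ln l).card ≤ q + 1)
    (hmod : ∀ l, (B ∩ ln l).card ≡ 1 [MOD p])
    (hk : S.card ≤ q + 5) (hsum : ind K B = ∑ l ∈ S, ind K (ln l)) : S.card ≤ q + 1 := by
  have hqQ : 5 * q ≤ Q := by rw [hQ]; nlinarith
  have hval : ∀ x, (ind K B) x = (mult ln S x : K) := fun x => by rw [hsum, sum_ind_apply]
  have hmB : ∀ x, mult ln S x = 1 → x ∈ B := by
    intro x hx
    by_contra hxB
    have := hval x
    rw [hx] at this
    simp [ind, hxB] at this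
  have hone : ∀ l ∈ S, Q + 2 ≤ ((ln l).filter (fun x => mult ln S x = 1)).card + S.card := by
    intro l hl
    have h1 := H.mult_two_le S l hl
    have h2 : ln l ⊆ ((ln l).filter (fun x => mult ln S x = 1)) ∪ ((ln l).filter (fun x => 2 ≤ mult ln S x)) := by
      intro x hx
      have h3 : 0 < mult ln S x := Finset.card_pos.2 ⟨l, by simp [hl, hx]⟩
      simp only [mem_union, mem_filter, hx, true_and]
      omega
    have h3 := (Finset.card_le_card h2).trans (Finset.card_union_le _ _)
    rw [H.cardl] at h3
    omega
  have hw1 : S.card * (Q + 2 - S.card) ≤ B.card := by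
    have h1 : S.biUnion (fun l => (ln l).filter (fun x => mult ln S x = 1)) ⊆ B := by
      intro x hx
      simp only [mem_biUnion, mem_filter] at hx
      obtain ⟨l, _, _, h⟩ := hx
      exact hmB x h
    refine le_trans ?_ (Finset.card_le_card h1)
    rw [Finset.card_biUnion]
    · rw [← smul_eq_mul]
      apply Finset.card_nsmul_le_sum
      intro l hl
      have := hone l hl
      omega
    · intro l hl m hm hlm
      rw [Function.onFun, Finset.disjoint_left]
      intro x hx hx'
      simp only [mem_filter] at hx hx'
      have hl := Finset.mem_coe.1 hl
      have hm := Finset.mem_coe.1 hm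
      have h2 := hx.2
      rw [mult, Finset.card_eq_one] at h2
      obtain ⟨a, ha⟩ := h2
      have hl' : l ∈ ({a} : Finset L) := by rw [← ha]; simp [hl, hx.1]
      have hm' : m ∈ ({a} : Finset L) := by rw [← ha]; simp [hm, hx'.1]
      simp only [mem_singleton] at hl' hm'
      exact hlm (hl'.trans hm'.symm)
  obtain ⟨l1, hl1⟩ := hSne
  have hw2 : B.card ≤ Q * q + Q + 1 := by
    have h1 := hone l1 hl1
    have h2 : 0 < ((ln l1).filter (fun x => mult ln S x = 1)).card := by omega
    obtain ⟨R, hR⟩ := Finset.card_pos.1 h2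
    simp only [mem_filter] at hR
    have hRB := hmB R hR.2
    have h3 := H.sum_mem R B hRB
    have hmem : l1 ∈ univ.filter (fun l => R ∈ ln l) := by simp [hR.1]
    rw [← Finset.add_sum_erase _ _ hmem] at h3
    have h4 : ∑ l ∈ (univ.filter (fun l => R ∈ ln l)).erase l1, (B ∩ ln l).card ≤ 
      ((univ.filter (fun l => R ∈ ln l)).erase l1).card • (q + 1) := by
      apply Finset.sum_le_card_nsmul
      intro l hl
      simp only [mem_erase, mem_filter, mem_univ, true_and] at hl
      apply hsh
      intro hlS
      have h5 := hR.2
      rw [mult, Finset.card_eq_one] at h5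
      obtain ⟨a, ha⟩ := h5
      have hl' : l ∈ ({a} : Finset L) := by rw [← ha]; simp [hl.2, hlS]
      have hm' : l1 ∈ ({a} : Finset L) := by rw [← ha]; simp [hl1, hR.1]
      simp only [mem_singleton] at hl' hm'
      exact hl.1 (hl'.trans hm'.symm)
    rw [Finset.card_erase_of_mem hmem, H.cardt, smul_eq_mul, Nat.add_sub_cancel] at h4
    have h6 : (B ∩ ln l1).card ≤ Q + 1 := by
      rw [← H.cardl l1]; exact Finset.card_le_card Finset.inter_subset_right
    nlinarith
  have hcast : ∀ l, ((B ∩ ln l).card : K) = 1 := by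
    intro l
    have := CharP.natCast_eq_natCast' K p (hmod l)
    simpa using this
  have hq0 : (q : K) = 0 := (CharP.cast_eq_zero_iff K p q).2 hpq
  have hk1 : (S.card : K) = 1 := by
    have h1 : ∑ x ∈ ln l1, (ind K B) x = ((∑ x ∈ ln l1, mult ln S x : ℕ) : K) := by
      push_cast
      exact Finset.sum_congr rfl (fun x _ => hval x)
    rw [sum_mult] at h1
    have h2 : ∑ x ∈ ln l1, (ind K B) x = ((B ∩ ln l1).card : K) := by
      simp only [ind]
      rw [← Finset.sum_filter, Finset.filter_mem_eq_inter, Finset.inter_comm]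
      simp
    rw [h2, hcast] at h1
    rw [h1]
    push_cast
    rw [Finset.card_eq_sum_ones]
    push_cast
    apply Finset.sum_congr rfl
    intro l _
    by_cases h : l1 = l
    · subst h
      rw [Finset.inter_self, H.cardl, hQ]
      push_cast
      rw [hq0]; simp
    · have h3 := H.inter_le h
      obtain ⟨x, hx1, hx2⟩ := H.meet l1 l
      have h4 : 0 < (ln l1 ∩ ln l).card := Finset.card_pos.2 ⟨x, by simp [hx1, hx2]⟩
      have h5 : (ln l1 ∩ ln l).card = 1 := by omega
      rw [h5]; simp
  by_contra! hc
  have hne : S.card ≠ q + 2 := by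
    intro h
    rw [h] at hk1
    push_cast at hk1
    rw [hq0] at hk1
    have : (1 : K) = 0 := by linear_combination hk1
    exact one_ne_zero this
  have h3 : S.card = q + 3 ∨ S.card = q + 4 ∨ S.card = q + 5 := by omega
  obtain ⟨t, rfl⟩ : ∃ t, q = t + 5 := ⟨q - 5, by omega⟩
  have hQt : Q = t ^ 2 + 10 * t + 25 := by rw [hQ]; ring
  have h8 : Q + 2 - (t + 5 + 3) = t ^ 2 + 9 * t + 19 := by omega
  have h9 : Q + 2 - (t + 5 + 4) = t ^ 2 + 9 * t + 18 := by omega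
  have h10 : Q + 2 - (t + 5 + 5) = t ^ 2 + 9 * t + 17 := by omega
  rcases h3 with h | h | h
  · rw [h, h8] at hw1
    rw [hQt] at hw2
    nlinarith
  · rw [h, h9] at hw1
    rw [hQt] at hw2
    nlinarith
  · rw [h, h10] at hw1
    rw [hQt] at hw2
    nlinarith

theorem comb_main {K : Type*} [Field K] {p h : ℕ} [CharP K p] [Nonempty L] (hp : p.Prime) (H : PPlane ln Q)
    {q : ℕ} (hQ : Q = q ^ 2) (hq : 4 < q) (hh : 1 ≤ h) (hqp : q = p ^ h)
    (C : Submodule K (P → K)) (hCl : ∀ l, ind K (ln l) ∈ C) (hIB : ∀ c ∈ C, IB ln Q (supp c))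
    (B : Finset P) (hB : ind K B ∈ C)
    (hmod : ∀ l, (B ∩ ln l).card ≡ 1 [MOD p])
    (hA : ∀ l, (B ∩ ln l).card ≤ q + 1 ∨ Q ≤ (B ∩ ln l).card + q + 1)
    (hw : B.card ≤ q ^ 3 + 2 * q ^ 2) :
    (B.card = q ^ 3 + 1 ∧ ∀ l, (B ∩ ln l).card = 1 ∨ (B ∩ ln l).card = q + 1) ∨
    ∃ S : Finset L, S.card ≤ q + 1 ∧ ind K B = ∑ l ∈ S, ind K (ln l) := by
  have hpq : p ∣ q := by rw [hqp]; exact dvd_pow_self p (by omega)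
  have hqQ : 5 * q ≤ Q := by rw [hQ]; nlinarith
  have hpos : ∀ l, 1 ≤ (B ∩ ln l).card := by
    intro l
    by_contra hc
    have h0 : (B ∩ ln l).card = 0 := by omega
    have := hmod l
    rw [h0] at this
    have := (Nat.modEq_iff_dvd' (by omega)).1 this
    exact hp.one_lt.ne' (Nat.dvd_one.1 this)
  have hnq : ∀ l, (B ∩ ln l).card ≠ q := by
    intro l hl
    have h1 := hmod l
    rw [hl] at h1
    have h2 := (Nat.modEq_iff_dvd' (by omega)).1 h1.symm
    have h3 : p ∣ 1 := by
      have h4 : q - (q - 1) = 1 := by omega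
      rw [← h4]; exact Nat.dvd_sub hpq h2
    exact hp.one_lt.ne' (Nat.dvd_one.1 h3)
  have hIBB : IB ln Q B := by
    have := hIB _ hB
    rwa [supp_ind] at this
  by_cases hlong : ∃ l0, Q ≤ (B ∩ ln l0).card + q + 1
  swap
  · left
    push Not at hlong
    apply case1 H hQ hq B hIBB hnq _ hpos
    intro l
    rcases hA l with h | h
    · exact h
    · exact absurd h (by have := hlong l; omega)
  right
  obtain ⟨l0, hl0⟩ := hlong
  set S := univ.filter (fun l => Q ≤ (B ∩ ln l).card + q + 1) with hS
  have hmS : ∀ l, l ∈ S ↔ Q ≤ (B ∩ ln l).card + q + 1 := fun l => by simp [hS]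
  have hsh : ∀ l ∉ S, (B ∩ ln l).card ≤ q + 1 := by
    intro l hl
    rcases hA l with h | h
    · exact h
    · exact absurd ((hmS l).2 h) hl
  have hcov : ∀ x ∈ B, 1 ≤ mult ln S x := by
    intro R hRB
    by_contra hc
    have h0 : mult ln S R = 0 := by omega
    rw [mult, Finset.card_eq_zero, Finset.filter_eq_empty_iff] at h0
    refine case2a H hQ hq B hIBB hnq l0 hl0 ?_ R hRB ?_
    · have h1 := hIB _ (C.sub_mem hB (hCl l0))
      convert h1 using 1
      ext x
      rw [mem_supp]
      simp only [mem_union, mem_sdiff, Pi.sub_apply, ind]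
      by_cases h2 : x ∈ B <;> by_cases h3 : x ∈ ln l0 <;> simp [h2, h3]
    · intro l hl
      apply hsh
      intro hlS
      exact h0 hlS hl
  have hS5 : q = 5 → ∀ l ∈ S, 21 ≤ (B ∩ ln l).card := by
    intro h5 l hl
    have hp5 : p = 5 := by
      rw [h5] at hpq
      exact (Nat.prime_dvd_prime_iff_eq hp (by norm_num)).1 hpq
    have h1 := (hmS l).1 hl
    have h2 := hmod l
    rw [hp5, Nat.ModEq] at h2
    rw [hQ, h5] at h1
    omega
  have hq6 : q ≠ 6 := by
    intro h6
    have h1 : p ∣ 2 * 3 := by rw [h6] at hpq; exact hpq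
    have h2 : (2 : ℕ) ∣ p ^ h := by rw [← hqp, h6]; norm_num
    have h3 : (3 : ℕ) ∣ p ^ h := by rw [← hqp, h6]; norm_num
    have h4 := (Nat.prime_dvd_prime_iff_eq Nat.prime_two hp).1 (Nat.prime_two.dvd_of_dvd_pow h2)
    have h5 := (Nat.prime_dvd_prime_iff_eq Nat.prime_three hp).1 (Nat.prime_three.dvd_of_dvd_pow h3)
    omega
  have hk := k_bound H hQ hq hq6 B S (fun l hl => (hmS l).1 hl) hS5 hw
  have hsum := bad_zero (K := K) H hQ hq B S (fun l hl => (hmS l).1 hl) hk hcov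
    (hIB _ (C.sub_mem hB (C.sum_mem (fun l _ => hCl l))))
  exact ⟨S, k_final (K := K) (p := p) H hQ hq hpq B S ⟨l0, (hmS l0).2 hl0⟩ hsh hmod hk hsum, hsum⟩

end comb
end QH

namespace QH
open Finset Polynomial Matrix

theorem dvd_det_of_rank {F : Type*} [Field F] (s t : ℕ) (M : Matrix (Fin s) (Fin s) F[X]) (x : F)
    (hr : (M.map (eval x)).rank ≤ t) : (X - C x) ^ (s - t) ∣ M.det := by
  classical
  obtain ⟨L, L', D, hD⟩ := Pivot.exists_list_transvec_mul_mul_list_transvec_eq_diagonal (M.map (eval x))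
  set A := (L.map TransvectionStruct.toMatrix).prod with hA
  set B := (L'.map TransvectionStruct.toMatrix).prod with hB
  have hAd : A.det = 1 := TransvectionStruct.det_toMatrix_prod L
  have hBd : B.det = 1 := TransvectionStruct.det_toMatrix_prod L'
  set M' := A.map C * M * B.map C with hM'
  have hdet : M'.det = M.det := by
    have e : ∀ Z : Matrix (Fin s) (Fin s) F, (Z.map C).det = C Z.det := by
      intro Z
      exact (RingHom.map_det C Z).symm
    rw [hM', Matrix.det_mul, Matrix.det_mul, e, e, hAd, hBd]; simp
  have hmap : M'.map (eval x) = diagonal D := by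
    rw [← hD, hM']
    have e : ∀ Z : Matrix (Fin s) (Fin s) F, (Z.map C).map (evalRingHom x) = Z := by
      intro Z; ext i j; simp
    have e2 : (M'.map (evalRingHom x)) = A * (M.map (evalRingHom x)) * B := by
      rw [hM', Matrix.map_mul, Matrix.map_mul, e, e]
    exact e2
  have hrank : (univ.filter (fun i => D i ≠ 0)).card ≤ t := by
    have h1 : (diagonal D).rank ≤ t := by
      rw [← hD]
      rw [Matrix.rank_mul_eq_left_of_isUnit_det _ _ (by rw [hBd]; exact isUnit_one),
        Matrix.rank_mul_eq_right_of_isUnit_det _ _ (by rw [hAd]; exact isUnit_one)]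
      exact hr
    rw [Matrix.rank_diagonal, Fintype.card_subtype] at h1
    exact h1
  have hcol : ∀ i j, ∃ z, M' i j = z * (if D j = 0 then X - C x else 1) := by
    intro i j
    by_cases h : D j = 0
    · simp only [h, if_true]
      have h2 : eval x (M' i j) = 0 := by
        have := congrFun (congrFun hmap i) j
        rw [Matrix.map_apply] at this
        rw [this, diagonal_apply]
        split_ifs with hij
        · rw [hij]; exact h
        · rfl
      obtain ⟨z, hz⟩ := dvd_iff_isRoot.2 h2
      exact ⟨z, by rw [hz, mul_comm]⟩
    · exact ⟨M' i j, by simp [h]⟩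
  choose Z hZ using hcol
  have hfac : M' = Matrix.of Z * diagonal (fun j => if D j = 0 then X - C x else 1) := by
    ext1 i j
    rw [Matrix.mul_diagonal, Matrix.of_apply, hZ]
  rw [← hdet, hfac, Matrix.det_mul, Matrix.det_diagonal]
  apply Dvd.dvd.mul_left
  rw [Finset.prod_ite, Finset.prod_const, Finset.prod_const_one, mul_one]
  apply pow_dvd_pow
  have h3 := Finset.card_filter_add_card_filter_not (s := (univ : Finset (Fin s))) (fun i => D i = 0)
  rw [Finset.card_univ, Fintype.card_fin] at h3
  have : (univ.filter (fun i => ¬ D i = 0)).card ≤ t := hrank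
  omega

theorem hankel {F : Type*} [Field F] [Fintype F] [DecidableEq F] (c : F → F → F) (P : ℕ → F[X])
    (hdeg : ∀ j, (P j).natDegree ≤ j) (hev : ∀ j x, eval x (P j) = ∑ y, c x y * y ^ j) (x0 : F) :
    ∑ x, ((univ.filter (fun y => c x0 y ≠ 0)).card - (univ.filter (fun y => c x y ≠ 0)).card) ≤
      (univ.filter (fun y => c x0 y ≠ 0)).card * ((univ.filter (fun y => c x0 y ≠ 0)).card - 1) := by
  set s := (univ.filter (fun y => c x0 y ≠ 0)).card with hs
  set M : Matrix (Fin s) (Fin s) F[X] := Matrix.of (fun i j => P (i + j)) with hM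
  have hMx : ∀ x, M.map (eval x) = Matrix.of (fun (i : Fin s) (j : Fin s) => ∑ y, c x y * y ^ ((i : ℕ) + j)) := by
    intro x; ext i j; simp [hM, hev]
  have hsup : ∀ x (j : ℕ), ∑ y, c x y * y ^ j = ∑ y : {y // c x y ≠ 0}, c x y * (y : F) ^ j := by
    intro x j
    have h1 := Finset.sum_subtype (univ.filter (fun y => c x y ≠ 0)) (p := fun y => c x y ≠ 0) (F := inferInstance)
      (by intro y; simp) (fun y => c x y * y ^ j)
    refine Eq.trans ?_ h1
    symm
    apply Finset.sum_filter_of_ne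
    intro y _ h h0
    exact h (by rw [h0, zero_mul])
  have hdet0 : M.det ≠ 0 := by
    intro h
    have h1 : (M.map (eval x0)).det = 0 := by
      have := RingHom.map_det (evalRingHom x0) M
      rw [h, map_zero] at this
      exact this.symm
    have hcard : Fintype.card {y // c x0 y ≠ 0} = s := by rw [Fintype.card_subtype]
    let e : Fin s ≃ {y // c x0 y ≠ 0} := (Fintype.equivFinOfCardEq hcard).symm
    have h2 : M.map (eval x0) = (Matrix.vandermonde (fun k => ((e k : F))))ᵀ *
        diagonal (fun k => c x0 (e k)) * Matrix.vandermonde (fun k => (e k : F)) := by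
      rw [hMx]
      ext i j
      rw [Matrix.mul_apply, Matrix.of_apply, hsup, ← e.sum_comp]
      apply Finset.sum_congr rfl
      intro k _
      rw [Matrix.mul_diagonal, Matrix.transpose_apply, Matrix.vandermonde_apply,
        Matrix.vandermonde_apply, pow_add]
      ring
    rw [h2, Matrix.det_mul, Matrix.det_mul, Matrix.det_transpose, Matrix.det_diagonal] at h1
    have hv : (Matrix.vandermonde (fun k => (e k : F))).det ≠ 0 := by
      rw [Matrix.det_vandermonde_ne_zero_iff]
      exact Subtype.val_injective.comp e.injective
    have hd : ∏ k, c x0 (e k) ≠ 0 := Finset.prod_ne_zero_iff.2 (fun k _ => (e k).2)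
    exact mul_ne_zero (mul_ne_zero hv hd) hv h1
  have hdegdet : M.det.natDegree ≤ s * (s - 1) := by
    rw [Matrix.det_apply]
    apply Polynomial.natDegree_sum_le_of_forall_le
    intro σ _
    refine (Polynomial.natDegree_smul_le _ _).trans ?_
    refine (Polynomial.natDegree_prod_le _ _).trans ?_
    have h1 : ∑ i : Fin s, (M (σ i) i).natDegree ≤ ∑ i : Fin s, (((σ i : Fin s) : ℕ) + (i : ℕ)) :=
      Finset.sum_le_sum (fun i _ => hdeg _)
    refine h1.trans ?_
    rw [Finset.sum_add_distrib, Equiv.sum_comp σ (fun i : Fin s => (i : ℕ)), Fin.sum_univ_eq_sum_range (fun i => i) s,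
      ← two_mul, mul_comm, Finset.sum_range_id_mul_two]
  have hdvd : ∀ x, (X - C x) ^ (s - (univ.filter (fun y => c x y ≠ 0)).card) ∣ M.det := by
    intro x
    apply dvd_det_of_rank
    have h2 : M.map (eval x) = (Matrix.of (fun (i : Fin s) (k : {y // c x y ≠ 0}) => c x k * (k : F) ^ (i : ℕ))) *
       (Matrix.of (fun (k : {y // c x y ≠ 0}) (j : Fin s) => (k : F) ^ (j : ℕ))) := by
      rw [hMx]
      ext i j
      rw [Matrix.mul_apply, Matrix.of_apply, hsup]
      apply Finset.sum_congr rfl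
      intro k _
      rw [Matrix.of_apply, Matrix.of_apply, pow_add]
      ring
    rw [h2]
    refine (Matrix.rank_mul_le_left _ _).trans ((Matrix.rank_le_card_width _).trans ?_)
    rw [Fintype.card_subtype]
  have hprod : ∏ x : F, (X - C x) ^ (s - (univ.filter (fun y => c x y ≠ 0)).card) ∣ M.det := by
    apply Finset.prod_dvd_of_coprime
    · intro a _ b _ hab
      apply IsCoprime.pow
      exact Polynomial.pairwise_coprime_X_sub_C Function.injective_id hab
    · intro x _; exact hdvd x
  have h3 := Polynomial.natDegree_le_of_dvd hprod hdet0
  rw [Polynomial.natDegree_prod_of_monic _ _ (fun x _ => (monic_X_sub_C x).pow _)] at h3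
  have h4 : ∀ x : F, ((X - C x) ^ (s - (univ.filter (fun y => c x y ≠ 0)).card)).natDegree
      = s - (univ.filter (fun y => c x y ≠ 0)).card := by
    intro x
    rw [(monic_X_sub_C x).natDegree_pow, natDegree_X_sub_C, mul_one]
  simp_rw [h4] at h3
  exact h3.trans hdegdet
end QH

namespace QH
open Finset Polynomial Matrix

section
variable {F : Type*} [Field F] [Fintype F] [DecidableEq F]

/-- span of the indicators (as functions on vectors) of lines and of the whole plane -/
def vcode (F : Type*) [Field F] [DecidableEq F] : Submodule F ((Fin 3 → F) → F) :=
  Submodule.span F {f | ∃ φ : Fin 3 → F, f = fun v => if v ⬝ᵥ φ = 0 then 1 else 0}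

theorem vcode_gen (φ : Fin 3 → F) : (fun v : Fin 3 → F => if v ⬝ᵥ φ = 0 then (1 : F) else 0) ∈ vcode F :=
  Submodule.subset_span ⟨φ, rfl⟩

theorem vcode_smul {f : (Fin 3 → F) → F} (hf : f ∈ vcode F) (a : F) (ha : a ≠ 0) (v : Fin 3 → F) :
    f (a • v) = f v := by
  induction hf using Submodule.span_induction with
  | mem f h =>
    obtain ⟨φ, rfl⟩ := h
    simp [ha]
  | zero => rfl
  | add f g _ _ hf hg => simp [hf, hg]
  | smul c f _ hf => simp [hf]

theorem powsum_gen (α β γ : F) (j : ℕ) : ∃ P : F[X], P.natDegree ≤ j ∧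
    ∀ x, eval x P = ∑ y : F, (if α * x + β * y + γ = 0 then (1 : F) else 0) * y ^ j := by
  by_cases hβ : β = 0
  · subst hβ
    by_cases hj : j < Fintype.card F - 1
    · refine ⟨0, by simp, fun x => ?_⟩
      simp only [zero_mul, add_zero]
      rw [← Finset.mul_sum, FiniteField.sum_pow_lt_card_sub_one F j hj]
      simp
    · refine ⟨C (∑ y : F, y ^ j) * (1 - (C α * X + C γ) ^ (Fintype.card F - 1)), ?_, fun x => ?_⟩
      · refine (natDegree_C_mul_le _ _).trans ((natDegree_sub_le _ _).trans ?_)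
        simp only [natDegree_one, max_le_iff, zero_le, true_and]
        refine natDegree_pow_le.trans ?_
        have : (C α * X + C γ).natDegree ≤ 1 := natDegree_linear_le
        have := Nat.mul_le_mul_left (Fintype.card F - 1) this
        omega
      · simp only [zero_mul, add_zero]
        rw [← Finset.mul_sum]
        simp only [eval_mul, eval_C, eval_sub, eval_one, eval_pow, eval_add, eval_X]
        have h1 : 1 < Fintype.card F := Fintype.one_lt_card
        split_ifs with h
        · rw [h, zero_pow (by omega)]; ring
        · rw [FiniteField.pow_card_sub_one_eq_one _ h]; ring
  · refine ⟨(C (-α / β) * X + C (-γ / β)) ^ j, ?_, fun x => ?_⟩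
    · refine natDegree_pow_le.trans ?_
      have : (C (-α / β) * X + C (-γ / β)).natDegree ≤ 1 := natDegree_linear_le
      have := Nat.mul_le_mul_left j this
      omega
    · rw [Finset.sum_eq_single (-α / β * x + -γ / β)]
      · have : α * x + β * (-α / β * x + -γ / β) + γ = 0 := by field_simp; ring
        simp [this]
      · intro y _ hy
        have : α * x + β * y + γ ≠ 0 := by
          intro h
          apply hy
          field_simp
          linear_combination h
        simp [this]
      · simp

theorem powsum {f : (Fin 3 → F) → F} (hf : f ∈ vcode F) (b0 b1 b2 : Fin 3 → F) (j : ℕ) :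
    ∃ P : F[X], P.natDegree ≤ j ∧ ∀ x, eval x P = ∑ y : F, f (b2 + x • b0 + y • b1) * y ^ j := by
  induction hf using Submodule.span_induction with
  | mem f h =>
    obtain ⟨φ, rfl⟩ := h
    obtain ⟨P, h1, h2⟩ := powsum_gen (b0 ⬝ᵥ φ) (b1 ⬝ᵥ φ) (b2 ⬝ᵥ φ) j
    refine ⟨P, h1, fun x => ?_⟩
    rw [h2]
    apply Finset.sum_congr rfl
    intro y _
    have : (b2 + x • b0 + y • b1) ⬝ᵥ φ = b0 ⬝ᵥ φ * x + b1 ⬝ᵥ φ * y + b2 ⬝ᵥ φ := by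
      simp only [add_dotProduct, smul_dotProduct, smul_eq_mul]; ring
    beta_reduce
    rw [this]
  | zero => exact ⟨0, by simp, by simp⟩
  | add f g _ _ hf hg =>
    obtain ⟨P, h1, h2⟩ := hf
    obtain ⟨P', h1', h2'⟩ := hg
    refine ⟨P + P', (natDegree_add_le _ _).trans (max_le h1 h1'), fun x => ?_⟩
    simp [h2, h2', add_mul, Finset.sum_add_distrib]
  | smul c f _ hf =>
    obtain ⟨P, h1, h2⟩ := hf
    refine ⟨C c * P, (natDegree_C_mul_le _ _).trans h1, fun x => ?_⟩
    simp [h2, Finset.mul_sum, mul_assoc]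

/-- the column bound -/
theorem column_bound {f : (Fin 3 → F) → F} (hf : f ∈ vcode F) (b0 b1 b2 : Fin 3 → F) :
    ∑ x : F, ((univ.filter (fun y : F => f (b2 + y • b1) ≠ 0)).card - 
        (univ.filter (fun y : F => f (b2 + x • b0 + y • b1) ≠ 0)).card) ≤
      (univ.filter (fun y : F => f (b2 + y • b1) ≠ 0)).card * 
        ((univ.filter (fun y : F => f (b2 + y • b1) ≠ 0)).card - 1) := by
  choose P h1 h2 using fun j => powsum hf b0 b1 b2 j
  have := hankel (fun x y => f (b2 + x • b0 + y • b1)) P h1 h2 0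
  simpa using this
end
end QH

namespace QH
open Finset Polynomial Matrix LinearAlgebra.Projectivization
open scoped LinearAlgebra.Projectivization

section
variable {F : Type*} [Field F] [Fintype F] [DecidableEq F]

noncomputable instance : Fintype (ℙ F (Fin 3 → F)) := Fintype.ofFinite _
noncomputable instance : DecidableEq (ℙ F (Fin 3 → F)) := Classical.decEq _

/-- points of the line with coordinates `l` -/
noncomputable def lnp (F : Type*) [Field F] [Fintype F] [DecidableEq F] (l : ℙ F (Fin 3 → F)) :
    Finset (ℙ F (Fin 3 → F)) :=
  univ.filter (fun x => x.rep ⬝ᵥ l.rep = 0)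

theorem mem_lnp_rep {x l : ℙ F (Fin 3 → F)} : x ∈ lnp F l ↔ x.rep ⬝ᵥ l.rep = 0 := by
  simp [lnp]

theorem mem_lnp_mem {x l : ℙ F (Fin 3 → F)} : x ∈ lnp F l ↔ x ∈ l := by
  rw [mem_lnp_rep, Configuration.ofField.mem_iff]
  conv_rhs => rw [← x.mk_rep, ← l.mk_rep, Projectivization.orthogonal_mk]

theorem mem_lnp_mk {v φ : Fin 3 → F} (hv : v ≠ 0) (hφ : φ ≠ 0) :
    Projectivization.mk F v hv ∈ lnp F (Projectivization.mk F φ hφ) ↔ v ⬝ᵥ φ = 0 := by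
  rw [mem_lnp_mem, Configuration.ofField.mem_iff, Projectivization.orthogonal_mk hv hφ]

theorem mem_lnp_mk' {v : Fin 3 → F} (hv : v ≠ 0) (l : ℙ F (Fin 3 → F)) :
    Projectivization.mk F v hv ∈ lnp F l ↔ v ⬝ᵥ l.rep = 0 := by
  rw [← mem_lnp_mk hv l.rep_nonzero, l.mk_rep]

theorem order_eq : Configuration.ProjectivePlane.order (ℙ F (Fin 3 → F)) (ℙ F (Fin 3 → F)) = Fintype.card F := by
  have h1 := Configuration.ProjectivePlane.card_points (ℙ F (Fin 3 → F)) (ℙ F (Fin 3 → F))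
  have h2 := Projectivization.card_of_finrank F (Fin 3 → F) (n := 3) (by simp)
  rw [Nat.card_eq_fintype_card, h1] at h2
  simp only [Finset.sum_range_succ, Finset.sum_range_zero, Nat.card_eq_fintype_card] at h2
  set a := Configuration.ProjectivePlane.order (ℙ F (Fin 3 → F)) (ℙ F (Fin 3 → F))
  set b := Fintype.card F
  rcases lt_trichotomy a b with h | h | h
  · nlinarith
  · exact h
  · nlinarith

theorem pplane : PPlane (lnp F) (Fintype.card F) where
  join x y h := by
    obtain ⟨l, hl, _⟩ := Configuration.HasLines.existsUnique_line (ℙ F (Fin 3 → F)) (ℙ F (Fin 3 → F)) x y h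
    exact ⟨l, mem_lnp_mem.2 hl.1, mem_lnp_mem.2 hl.2⟩
  meet l m := by
    by_cases h : l = m
    · subst h
      have : 0 < Configuration.pointCount (ℙ F (Fin 3 → F)) l := by
        rw [Configuration.ProjectivePlane.pointCount_eq]; omega
      rw [Configuration.pointCount] at this
      obtain ⟨⟨x, hx⟩⟩ := (Nat.card_pos_iff.1 this).1
      exact ⟨x, mem_lnp_mem.2 hx, mem_lnp_mem.2 hx⟩
    · obtain ⟨x, hx, _⟩ := Configuration.HasPoints.existsUnique_point (ℙ F (Fin 3 → F)) (ℙ F (Fin 3 → F)) l m h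
      exact ⟨x, mem_lnp_mem.2 hx.1, mem_lnp_mem.2 hx.2⟩
  uniq x y l m h h1 h2 h3 h4 := by
    rw [mem_lnp_mem] at h1 h2 h3 h4
    exact (Configuration.Nondegenerate.eq_or_eq h1 h2 h3 h4).resolve_left h
  cardl l := by
    have h := Configuration.ProjectivePlane.pointCount_eq (ℙ F (Fin 3 → F)) l
    rw [order_eq, Configuration.pointCount] at h
    classical
    rw [← h, Nat.card_eq_fintype_card, Fintype.card_subtype]
    congr 1
    ext x
    simp [mem_lnp_mem]
  cardt x := by
    have h := Configuration.ProjectivePlane.lineCount_eq (ℙ F (Fin 3 → F)) x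
    rw [order_eq, Configuration.lineCount] at h
    classical
    rw [← h, Nat.card_eq_fintype_card, Fintype.card_subtype]
    congr 1
    ext l
    simp [mem_lnp_mem]

/-- the planar code -/
noncomputable def pcode (F : Type*) [Field F] [Fintype F] [DecidableEq F] : Submodule F (ℙ F (Fin 3 → F) → F) :=
  (vcode F).map (LinearMap.funLeft F F (fun x : ℙ F (Fin 3 → F) => x.rep))

theorem pcode_mk {f : (Fin 3 → F) → F} (hf : f ∈ vcode F) (v : Fin 3 → F) (hv : v ≠ 0) :
    LinearMap.funLeft F F (fun x : ℙ F (Fin 3 → F) => x.rep) f (Projectivization.mk F v hv) = f v := by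
  obtain ⟨a, ha⟩ := Projectivization.exists_smul_eq_mk_rep F v hv
  rw [LinearMap.funLeft_apply, ← ha]
  exact vcode_smul hf a a.ne_zero v

theorem ind_lnp_mem (l : ℙ F (Fin 3 → F)) : ind F (lnp F l) ∈ pcode F := by
  refine ⟨_, vcode_gen l.rep, ?_⟩
  funext x
  simp [ind, mem_lnp_rep]

theorem IB_pcode (c : ℙ F (Fin 3 → F) → F) (hc : c ∈ pcode F) : IB (lnp F) (Fintype.card F) (supp c) := by
  have H := pplane (F := F)
  obtain ⟨f, hf, rfl⟩ := hc
  set c := LinearMap.funLeft F F (fun x : ℙ F (Fin 3 → F) => x.rep) f with hcdef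
  have hcmk : ∀ v (hv : v ≠ 0), c (Projectivization.mk F v hv) = f v := pcode_mk hf
  intro T n m hT hTn hTm hnm
  have hQ1 : 1 < Fintype.card F := Fintype.one_lt_card
  have hex : ∀ l l' : ℙ F (Fin 3 → F), T ∈ lnp F l → T ∈ lnp F l' → l ≠ l' → ∃ x, x ∈ lnp F l ∧ x ∉ lnp F l' := by
    intro l l' h1 h2 hne
    obtain ⟨x, hx, hxT⟩ := Finset.exists_mem_ne (show 1 < (lnp F l).card by rw [H.cardl]; omega) T
    exact ⟨x, hx, fun h => hne (H.uniq x T l l' hxT hx h1 h h2)⟩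
  obtain ⟨X0, hX0m, hX0n⟩ := hex m n hTm hTn hnm.symm
  obtain ⟨X2, hX2n, hX2m⟩ := hex n m hTn hTm hnm
  set t := T.rep with ht
  set b0 := X0.rep
  set b2 := X2.rep
  rw [mem_lnp_rep] at hX0m hX0n hX2n hX2m
  have hTn' := mem_lnp_rep.1 hTn
  have hTm' := mem_lnp_rep.1 hTm
  have ht0 : t ≠ 0 := T.rep_nonzero
  have hdm : ∀ x y : F, (b2 + x • b0 + y • t) ⬝ᵥ m.rep = b2 ⬝ᵥ m.rep := by
    intro x y
    simp only [add_dotProduct, smul_dotProduct, b0, t, hX0m, hTm']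
    simp
  have hdn : ∀ x y : F, (b2 + x • b0 + y • t) ⬝ᵥ n.rep = x * (b0 ⬝ᵥ n.rep) := by
    intro x y
    simp only [add_dotProduct, smul_dotProduct, b2, t, hX2n, hTn']
    simp
  have hnz : ∀ x y : F, b2 + x • b0 + y • t ≠ 0 := by
    intro x y h
    have := hdm x y
    rw [h, zero_dotProduct] at this
    exact hX2m this.symm
  set g : F × F → ℙ F (Fin 3 → F) := fun z => Projectivization.mk F _ (hnz z.1 z.2) with hg
  have hginj : Function.Injective g := by
    rintro ⟨x, y⟩ ⟨x', y'⟩ h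
    simp only [hg] at h
    rw [Projectivization.mk_eq_mk_iff'] at h
    obtain ⟨a, ha⟩ := h
    have h1 := congrArg (fun v => v ⬝ᵥ m.rep) ha
    simp only [smul_dotProduct, hdm, smul_eq_mul] at h1
    have ha1 : a = 1 := by
      have : (a - 1) * (b2 ⬝ᵥ m.rep) = 0 := by linear_combination h1
      exact sub_eq_zero.1 ((mul_eq_zero.1 this).resolve_right hX2m)
    subst ha1
    have h2 := congrArg (fun v => v ⬝ᵥ n.rep) ha
    simp only [smul_dotProduct, hdn, smul_eq_mul, one_mul] at h2
    have hx : x' = x := mul_right_cancel₀ hX0n h2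
    subst hx
    rw [one_smul] at ha
    have h3 : (y' - y) • t = 0 := by
      rw [sub_smul, sub_eq_zero]
      exact add_left_cancel ha
    have hy : y' = y := sub_eq_zero.1 ((smul_eq_zero.1 h3).resolve_right ht0)
    rw [hy]
  have hgm : ∀ z, g z ∉ lnp F m := by
    intro z hz
    rw [hg, mem_lnp_mk', hdm] at hz
    exact hX2m hz
  have hcg : ∀ x y, c (g (x, y)) = f (b2 + x • b0 + y • t) := fun x y => hcmk _ _
  -- the column at 0 is n
  have himg : (univ.image (fun y : F => g (0, y))) = (lnp F n).erase T := by
    apply Finset.eq_of_subset_of_card_le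
    · intro P hP
      simp only [mem_image, mem_univ, true_and] at hP
      obtain ⟨y, rfl⟩ := hP
      rw [mem_erase]
      refine ⟨?_, ?_⟩
      · intro h
        exact hgm (0, y) (h ▸ hTm)
      · rw [hg, mem_lnp_mk', hdn]; simp
    · rw [Finset.card_erase_of_mem hTn, H.cardl, Finset.card_image_of_injective]
      · simp
      · intro y y' h
        exact (Prod.mk.inj (hginj h)).2
  have hsn : (supp c ∩ lnp F n).card = (univ.filter (fun y : F => f (b2 + y • t) ≠ 0)).card := by
    have h1 : supp c ∩ lnp F n = (univ.filter (fun y : F => f (b2 + y • t) ≠ 0)).image (fun y => g (0, y)) := by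
      ext P
      simp only [mem_inter, mem_image, mem_filter, mem_univ, true_and]
      constructor
      · rintro ⟨h2, h3⟩
        have h4 : P ∈ (lnp F n).erase T := mem_erase.2 ⟨by rintro rfl; exact hT h2, h3⟩
        rw [← himg] at h4
        simp only [mem_image, mem_univ, true_and] at h4
        obtain ⟨y, rfl⟩ := h4
        refine ⟨y, ?_, rfl⟩
        rw [mem_supp, hcg] at h2
        simpa using h2
      · rintro ⟨y, hy, rfl⟩
        refine ⟨?_, ?_⟩
        · rw [mem_supp, hcg]; simpa using hy
        · rw [hg, mem_lnp_mk', hdn]; simp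
    rw [h1, Finset.card_image_of_injective]
    intro y y' h
    exact (Prod.mk.inj (hginj h)).2
  have hcol := column_bound hf b0 t b2
  rw [← hsn] at hcol
  set s := (supp c ∩ lnp F n).card with hs
  -- total count
  have htot : (supp c ∩ lnp F m).card + 
      ∑ x : F, (univ.filter (fun y : F => f (b2 + x • b0 + y • t) ≠ 0)).card ≤ (supp c).card := by
    have h1 : ∑ x : F, (univ.filter (fun y : F => f (b2 + x • b0 + y • t) ≠ 0)).card
        = ((univ.filter (fun z : F × F => f (b2 + z.1 • b0 + z.2 • t) ≠ 0)).image g).card := by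
      rw [Finset.card_image_of_injective _ hginj]
      simp only [Finset.card_filter]
      rw [Fintype.sum_prod_type]
    rw [h1, ← Finset.card_union_of_disjoint]
    · apply Finset.card_le_card
      intro P hP
      simp only [mem_union, mem_inter, mem_image, mem_filter, mem_univ, true_and] at hP
      rcases hP with h | ⟨⟨x, y⟩, h, rfl⟩
      · exact h.1
      · rw [mem_supp, hcg]; exact h
    · rw [Finset.disjoint_left]
      intro P hP hP'
      simp only [mem_inter, mem_image] at hP hP'
      obtain ⟨z, _, rfl⟩ := hP'
      exact hgm z hP.2
  have hlow : Fintype.card F * s ≤ ∑ x : F, (univ.filter (fun y : F => f (b2 + x • b0 + y • t) ≠ 0)).card + s * (s - 1) := by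
    refine le_trans ?_ (Nat.add_le_add_left hcol _)
    rw [← Finset.sum_add_distrib, ← Finset.card_univ, ← smul_eq_mul]
    apply Finset.card_nsmul_le_sum
    intro x _
    omega
  have hss : s * (s - 1) + s = s * s := by
    rcases Nat.eq_zero_or_pos s with h | h
    · simp [h]
    · obtain ⟨k, hk⟩ := Nat.exists_eq_add_of_le h
      rw [hk]; simp; ring
  nlinarith

end
end QH

namespace QH
open Finset Polynomial Matrix

section
variable {F : Type*} [Field F] [Fintype F] [DecidableEq F]

def Ind3 (b0 t b2 : Fin 3 → F) : Prop :=
  ∀ x y z : F, x • b0 + y • t + z • b2 = 0 → x = 0 ∧ y = 0 ∧ z = 0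

open Classical in
noncomputable def colU (U : (Fin 3 → F) → Prop) (b t : Fin 3 → F) : Finset F :=
  univ.filter (fun y => U (b + y • t))

theorem mem_colU {U : (Fin 3 → F) → Prop} {b t : Fin 3 → F} {y : F} : y ∈ colU U b t ↔ U (b + y • t) := by
  simp [colU]

open Classical in
structure Unital (q : ℕ) (U : (Fin 3 → F) → Prop) : Prop where
  code : ∃ f ∈ vcode F, ∀ v, v ≠ 0 → f v = if U v then 1 else 0
  two : ∀ b0 t b2, Ind3 b0 t b2 → ¬ U t → (colU U b2 t).card = 1 ∨ (colU U b2 t).card = q + 1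
  tang : ∀ b0 t b2, Ind3 b0 t b2 → ¬ U t → (colU U b0 t).card = q + 1 →
    (univ.filter (fun x : F => (colU U (b2 + x • b0) t).card = 1)).card = q + 1
  sec : ∀ b0 t b2, Ind3 b0 t b2 → ¬ U t → ∃ b', Ind3 b' t b2 ∧ (colU U b' t).card = q + 1
  ex : ∃ b0 t b2, Ind3 b0 t b2 ∧ ¬ U t

theorem Ind3.swap {b0 t b2 : Fin 3 → F} (h : Ind3 b0 t b2) : Ind3 b2 t b0 := by
  intro x y z hz
  obtain ⟨h1, h2, h3⟩ := h z y x (by rw [← hz]; abel)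
  exact ⟨h3, h2, h1⟩

theorem Ind3.rot {b0 t b2 : Fin 3 → F} (h : Ind3 b0 t b2) : Ind3 b0 b2 t := by
  intro x y z hz
  obtain ⟨h1, h2, h3⟩ := h x z y (by rw [← hz]; abel)
  exact ⟨h1, h3, h2⟩

theorem Ind3.shear {b0 t b2 : Fin 3 → F} (h : Ind3 b0 t b2) (a c d : F) :
    Ind3 (b0 + a • t) t (b2 + d • b0 + c • t) := by
  intro x y z hz
  obtain ⟨h1, h2, h3⟩ := h (x + z * d) (y + x * a + z * c) z (by rw [← hz]; module)
  subst h3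
  have hx : x = 0 := by simpa using h1
  subst hx
  exact ⟨rfl, by simpa using h2, rfl⟩

theorem Ind3.ne {b0 t b2 : Fin 3 → F} (h : Ind3 b0 t b2) (x y z : F) (hz : ¬ (x = 0 ∧ y = 0 ∧ z = 0)) :
    x • b0 + y • t + z • b2 ≠ 0 := fun h0 => hz (h x y z h0)

theorem Ind3.ne2 {b0 t b2 : Fin 3 → F} (h : Ind3 b0 t b2) (x y : F) : b2 + x • b0 + y • t ≠ 0 := by
  have := h.ne x y 1 (by simp)
  intro h0
  apply this
  rw [← h0]; module

theorem Unital.smul {q : ℕ} {U : (Fin 3 → F) → Prop} (h : Unital q U) (a : F) (ha : a ≠ 0)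
    (v : Fin 3 → F) (hv : v ≠ 0) : U (a • v) ↔ U v := by
  obtain ⟨f, hf, hfU⟩ := h.code
  have h1 := vcode_smul hf a ha v
  rw [hfU _ hv, hfU _ (smul_ne_zero ha hv)] at h1
  by_cases h2 : U v <;> by_cases h3 : U (a • v) <;> simp_all

theorem Unital.powsum {q : ℕ} {U : (Fin 3 → F) → Prop} (h : Unital q U) {b0 t b2 : Fin 3 → F}
    (hI : Ind3 b0 t b2) (j : ℕ) :
    ∃ P : F[X], P.natDegree ≤ j ∧ ∀ x, eval x P = ∑ y ∈ colU U (b2 + x • b0) t, y ^ j := by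
  classical
  obtain ⟨f, hf, hfU⟩ := h.code
  obtain ⟨P, h1, h2⟩ := QH.powsum hf b0 t b2 j
  refine ⟨P, h1, fun x => ?_⟩
  rw [h2, colU, Finset.sum_filter]
  apply Finset.sum_congr rfl
  intro y _
  rw [hfU _ (hI.ne2 x y)]
  split_ifs <;> simp

theorem Unital.lin {q : ℕ} {U : (Fin 3 → F) → Prop} (h : Unital q U) (hq : 1 ≤ q) {b0 t b2 : Fin 3 → F}
    (hI : Ind3 b0 t b2) (ht : ¬ U t) (hs : (colU U b0 t).card = q + 1) :
    ∃ l0 l1 : F, ∀ (G : F[X]), G.natDegree ≤ q → ∀ x,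
      ∑ y ∈ colU U (b2 + x • b0) t, eval y G = eval (l0 + l1 * x) G := by
  choose P h1 h2 using fun j => h.powsum hI j
  have hT := h.tang b0 t b2 hI ht hs
  have hP : ∀ j ≤ q, P j = (P 1) ^ j := by
    intro j hj
    apply Polynomial.eq_of_degree_sub_lt_of_eval_finset_eq 
      (univ.filter (fun x : F => (colU U (b2 + x • b0) t).card = 1))
    · rw [hT]
      refine lt_of_le_of_lt (Polynomial.degree_le_natDegree) ?_
      have : (P j - P 1 ^ j).natDegree ≤ j := by
        refine (natDegree_sub_le _ _).trans (max_le (h1 j) ?_)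
        refine natDegree_pow_le.trans ?_
        have := Nat.mul_le_mul_left j (h1 1)
        omega
      exact_mod_cast (by omega : (P j - P 1 ^ j).natDegree < q + 1)
    · intro x hx
      simp only [mem_filter, mem_univ, true_and] at hx
      obtain ⟨y, hy⟩ := Finset.card_eq_one.1 hx
      rw [eval_pow, h2, h2, hy]
      simp
  refine ⟨(P 1).coeff 0, (P 1).coeff 1, fun G hG x => ?_⟩
  have h3 : (P 1).coeff 0 + (P 1).coeff 1 * x = eval x (P 1) := by
    conv_rhs => rw [Polynomial.eq_X_add_C_of_natDegree_le_one (h1 1)]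
    simp; ring
  rw [h3]
  simp_rw [Polynomial.eval_eq_sum_range' (show G.natDegree < q + 1 by omega)]
  rw [Finset.sum_comm]
  apply Finset.sum_congr rfl
  intro j hj
  rw [← Finset.mul_sum, ← h2, hP j (by simp at hj; omega), eval_pow]

theorem line_alg {q : ℕ} (hq : 2 ≤ q) (hF : Fintype.card F = q ^ 2)
    (frob : ∀ a b : F, (a + b) ^ q = a ^ q + b ^ q)
    (Y : Finset F) (hY : Y.card = q + 1) (h0 : (0 : F) ∉ Y)
    (hG : ∀ G : F[X], G.natDegree ≤ q → ∑ y ∈ Y, eval y G = eval 0 G)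
    (ε : F) (hM : ∀ G : F[X], G.natDegree ≤ q → ∑ y ∈ Y, eval y⁻¹ G = eval ε G) :
    ∃ k : F, k ≠ 0 ∧ ∀ y, y ∈ Y ↔ y ^ (q + 1) = k := by
  have hne : ∀ y ∈ Y, y ≠ 0 := fun y hy h => h0 (h ▸ hy)
  -- key products
  have e1 : ∀ i ∈ Y, ∏ k ∈ Y.erase i, (i - k) = ∏ k ∈ Y.erase i, (0 - k) := by
    intro i hi
    have := hG (∏ k ∈ Y.erase i, (X - C k)) (by
      rw [natDegree_prod_of_monic _ _ (fun k _ => monic_X_sub_C k)]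
      simp [Finset.card_erase_of_mem hi, hY])
    simp only [eval_prod, eval_sub, eval_X, eval_C] at this
    rw [Finset.sum_eq_single i] at this
    · exact this
    · intro y hy hyi
      exact Finset.prod_eq_zero (i := y) (mem_erase.2 ⟨hyi, hy⟩) (sub_self y)
    · exact fun h => absurd hi h
  have e2 : ∀ i ∈ Y, ∏ k ∈ Y.erase i, (i⁻¹ - k⁻¹) = ∏ k ∈ Y.erase i, (ε - k⁻¹) := by
    intro i hi
    have := hM (∏ k ∈ Y.erase i, (X - C k⁻¹)) (by
      rw [natDegree_prod_of_monic _ _ (fun k _ => monic_X_sub_C _)]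
      simp [Finset.card_erase_of_mem hi, hY])
    simp only [eval_prod, eval_sub, eval_X, eval_C] at this
    rw [Finset.sum_eq_single i] at this
    · exact this
    · intro y hy hyi
      exact Finset.prod_eq_zero (i := y) (mem_erase.2 ⟨hyi, hy⟩) (sub_self _)
    · exact fun h => absurd hi h
  have e3 : ∀ i ∈ Y, ∏ k ∈ Y.erase i, (i⁻¹ - k⁻¹) = (i⁻¹) ^ q := by
    intro i hi
    have h1 : ∀ k ∈ Y.erase i, (i⁻¹ - k⁻¹) = (i⁻¹ * (0 - k)⁻¹) * (i - k) := by
      intro k hk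
      have hi0 := hne i hi
      have hk0 := hne k (mem_of_mem_erase hk)
      rw [zero_sub]
      field_simp
      ring
    rw [Finset.prod_congr rfl h1, Finset.prod_mul_distrib, Finset.prod_mul_distrib, e1 i hi,
      Finset.prod_const, Finset.card_erase_of_mem hi, hY, mul_assoc, ← Finset.prod_mul_distrib]
    rw [Finset.prod_eq_one (f := fun k => (0 - k)⁻¹ * (0 - k))]
    · simp
    · intro k hk
      have hk0 := hne k (mem_of_mem_erase hk)
      rw [zero_sub]
      exact inv_mul_cancel₀ (neg_ne_zero.2 hk0)
  set κ := ∏ k ∈ Y, (ε - k⁻¹) with hκ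
  have e4 : ∀ i ∈ Y, (ε - i⁻¹) * (i⁻¹) ^ q = κ := by
    intro i hi
    rw [hκ, ← Finset.mul_prod_erase _ _ hi, ← e2 i hi, e3 i hi]
  have frobs : ∀ a b : F, (a - b) ^ q = a ^ q - b ^ q := by
    intro a b
    have := frob (a - b) b
    rw [sub_add_cancel] at this
    rw [this]; ring
  have hQ : ∀ a : F, (a ^ q) ^ q = a := by
    intro a
    rw [← pow_mul, ← pow_two, ← hF, FiniteField.pow_card]
  have e5 : ∀ i ∈ Y, ε ^ q * i⁻¹ - ε * (i⁻¹) ^ q + (κ - κ ^ q) = 0 := by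
    intro i hi
    have h1 := e4 i hi
    have h2 : (ε ^ q - (i⁻¹) ^ q) * i⁻¹ = κ ^ q := by
      rw [← h1, mul_pow, frobs, hQ]
    linear_combination h2 - h1
  have e6 : (C (ε ^ q) * X - C ε * X ^ q + C (κ - κ ^ q) : F[X]) = 0 := by
    have hinj : Set.InjOn (fun y : F => y⁻¹) (Y : Set F) := fun a _ b _ h => inv_injective h
    apply Polynomial.eq_zero_of_degree_lt_of_eval_finset_eq_zero (Y.image (fun y => y⁻¹))
    · rw [Finset.card_image_of_injOn hinj, hY]
      refine lt_of_le_of_lt (Polynomial.degree_le_natDegree) ?_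
      have : (C (ε ^ q) * X - C ε * X ^ q + C (κ - κ ^ q) : F[X]).natDegree ≤ q := by
        refine (natDegree_add_le _ _).trans (max_le ((natDegree_sub_le _ _).trans (max_le ?_ ?_)) ?_)
        · exact (natDegree_C_mul_le _ _).trans (natDegree_X_le.trans (by omega))
        · exact natDegree_C_mul_X_pow_le _ _
        · exact (natDegree_C _).le.trans (Nat.zero_le _)
      exact_mod_cast (by omega : (C (ε ^ q) * X - C ε * X ^ q + C (κ - κ ^ q) : F[X]).natDegree < q + 1)
    · intro x hx
      simp only [mem_image] at hx
      obtain ⟨i, hi, rfl⟩ := hx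
      have := e5 i hi
      simp only [eval_add, eval_sub, eval_mul, eval_C, eval_X, eval_pow]
      exact this
  have hε : ε = 0 := by
    have := congrArg (fun p => coeff p q) e6
    simp only [coeff_add, coeff_sub, coeff_C_mul, coeff_X_pow, coeff_zero, coeff_X, coeff_C] at this
    have h1 : (1 : ℕ) ≠ q := by omega
    have h2 : q ≠ 0 := by omega
    simpa [h1, h2] using this
  have e7 : ∀ i ∈ Y, (i ^ (q + 1)) = (-κ)⁻¹ := by
    intro i hi
    have := e4 i hi
    rw [hε] at this
    rw [← this, zero_sub, neg_mul, neg_neg, ← pow_succ', inv_pow, inv_inv]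
  refine ⟨(-κ)⁻¹, ?_, ?_⟩
  · obtain ⟨i, hi⟩ := Finset.card_pos.1 (show 0 < Y.card by omega)
    rw [← e7 i hi]
    exact pow_ne_zero _ (hne i hi)
  · have hset : Y = (nthRoots (q + 1) ((-κ)⁻¹)).toFinset := by
      apply Finset.eq_of_subset_of_card_le
      · intro y hy
        rw [Multiset.mem_toFinset, mem_nthRoots (by omega)]
        exact e7 y hy
      · rw [hY]
        exact (Multiset.toFinset_card_le _).trans (card_nthRoots _ _)
    intro y
    rw [hset, Multiset.mem_toFinset, mem_nthRoots (by omega)]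

end
end QH

namespace QH
open Finset Polynomial Matrix

section
variable {F : Type*} [Field F] [Fintype F] [DecidableEq F]

theorem colU_shift (U : (Fin 3 → F) → Prop) (b t : Fin 3 → F) (μ : F) :
    colU U (b + μ • t) t = (colU U b t).image (fun y => y - μ) := by
  ext y
  simp only [mem_colU, mem_image]
  constructor
  · intro h
    refine ⟨y + μ, ?_, by ring⟩
    convert h using 1
    module
  · rintro ⟨z, hz, rfl⟩
    convert hz using 1
    module

theorem colU_shift_card (U : (Fin 3 → F) → Prop) (b t : Fin 3 → F) (μ : F) :
    (colU U (b + μ • t) t).card = (colU U b t).card := by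
  rw [colU_shift, Finset.card_image_of_injective _ (sub_left_injective)]

theorem Unital.norm {q : ℕ} {U : (Fin 3 → F) → Prop} (h : Unital q U) (hq : 1 ≤ q) {b0 t b2 : Fin 3 → F}
    (hI : Ind3 b0 t b2) (ht : ¬ U t) (hs : (colU U b0 t).card = q + 1) :
    ∃ l0 l1 : F, ∀ (G : F[X]), G.natDegree ≤ q → ∀ x : F,
      ∑ y ∈ colU U ((b2 + l0 • t) + x • (b0 + l1 • t)) t, eval y G = eval 0 G := by
  obtain ⟨l0, l1, hl⟩ := h.lin hq hI ht hs
  refine ⟨l0, l1, fun G hG x => ?_⟩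
  have e : (b2 + l0 • t) + x • (b0 + l1 • t) = (b2 + x • b0) + (l0 + l1 * x) • t := by module
  rw [e, colU_shift, Finset.sum_image (fun a _ b _ hab => sub_left_injective hab)]
  have := hl (G.comp (X - C (l0 + l1 * x))) (by
    rw [natDegree_comp, natDegree_X_sub_C, mul_one]; exact hG) x
  simpa using this

def Normd (q : ℕ) (U : (Fin 3 → F) → Prop) (b0 t b2 : Fin 3 → F) : Prop :=
  ∀ (G : F[X]), G.natDegree ≤ q → ∀ x : F, ∑ y ∈ colU U (b2 + x • b0) t, eval y G = eval 0 G

theorem Unital.sec_alg {q : ℕ} {U : (Fin 3 → F) → Prop} (h : Unital q U) (hq : 2 ≤ q)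
    (hF : Fintype.card F = q ^ 2) (frob : ∀ a b : F, (a + b) ^ q = a ^ q + b ^ q)
    {b0 t b2 : Fin 3 → F} (hI : Ind3 b0 t b2) (ht : ¬ U t)
    (hN : Normd q U b0 t b2) (x : F) (hx : (colU U (b2 + x • b0) t).card = q + 1) :
    ∃ k : F, k ≠ 0 ∧ ∀ y, U (b2 + x • b0 + y • t) ↔ y ^ (q + 1) = k := by
  set c := b2 + x • b0 with hc
  have h0 : (0 : F) ∉ colU U c t := by
    intro h0
    obtain ⟨i, hi, hi0⟩ := Finset.exists_mem_ne (by omega : 1 < (colU U c t).card) (0 : F)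
    have := hN (∏ k ∈ (colU U c t).erase i, (X - C k)) (by
      rw [natDegree_prod_of_monic _ _ (fun k _ => monic_X_sub_C k)]
      simp [Finset.card_erase_of_mem hi, hx]) x
    simp only [eval_prod, eval_sub, eval_X, eval_C, ← hc] at this
    rw [Finset.sum_eq_single i] at this
    · rw [Finset.prod_eq_zero (i := (0 : F)) (f := fun k => (0 : F) - k) (mem_erase.2 ⟨hi0.symm, h0⟩) (by simp)] at this
      rw [Finset.prod_eq_zero_iff] at this
      obtain ⟨k, hk, hk0⟩ := this
      exact (mem_erase.1 hk).1 (sub_eq_zero.1 hk0).symm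
    · intro y hy hyi
      exact Finset.prod_eq_zero (i := y) (mem_erase.2 ⟨hyi, hy⟩) (sub_self y)
    · exact fun h => absurd hi h
  have hcU : ¬ U c := by
    intro hcU
    apply h0
    rw [mem_colU]
    simpa using hcU
  have hI2 : Ind3 b0 c t := by
    have := (hI.shear 0 0 x).rot
    simpa using this
  obtain ⟨b', hb', hbs⟩ := h.sec b0 c t hI2 hcU
  obtain ⟨l0, l1, hl⟩ := h.lin (by omega) hb' hcU hbs
  have himg : colU U (t + (0 : F) • b') c = (colU U c t).image (fun y => y⁻¹) := by
    ext m
    simp only [zero_smul, add_zero, mem_colU, mem_image]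
    have key : ∀ m : F, m ≠ 0 → (U (t + m • c) ↔ U (c + m⁻¹ • t)) := by
      intro m hm
      have hne : c + m⁻¹ • t ≠ 0 := hI.ne2 x m⁻¹
      rw [← h.smul m hm _ hne]
      have e : m • (c + m⁻¹ • t) = t + m • c := by
        rw [smul_add m c, smul_smul, mul_inv_cancel₀ hm, one_smul, add_comm]
      rw [e]
    constructor
    · intro hm
      have hm0 : m ≠ 0 := by
        rintro rfl
        simp at hm
        exact ht hm
      exact ⟨m⁻¹, (key m hm0).1 hm, inv_inv m⟩
    · rintro ⟨y, hy, rfl⟩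
      have hy0 : y ≠ 0 := by
        rintro rfl
        exact h0 (mem_colU.2 hy)
      rw [key _ (inv_ne_zero hy0), inv_inv]
      exact hy
  obtain ⟨k, hk, hk2⟩ := line_alg hq hF frob (colU U c t) hx h0 (fun G hG => hN G hG x) l0 (by
    intro G hG
    have := hl G hG 0
    rw [himg, Finset.sum_image (fun a _ b _ hab => inv_injective hab)] at this
    simpa using this)
  exact ⟨k, hk, fun y => by rw [← hk2, mem_colU]⟩

theorem Unital.chart {q : ℕ} {U : (Fin 3 → F) → Prop} (h : Unital q U) (hq : 2 ≤ q)
    (hF : Fintype.card F = q ^ 2) (frob : ∀ a b : F, (a + b) ^ q = a ^ q + b ^ q) (hq0 : (q : F) = 0)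
    {b0 t b2 : Fin 3 → F} (hI : Ind3 b0 t b2) (ht : ¬ U t) (hN : Normd q U b0 t b2) :
    ∃ κ : F[X], κ.natDegree ≤ q + 1 ∧ (∀ x y, U (b2 + x • b0 + y • t) ↔ y ^ (q + 1) = eval x κ) ∧
      (∀ x, (eval x κ) ^ q = eval x κ) ∧
      (∀ x, (colU U (b2 + x • b0) t).card = 1 → eval x κ = 0) ∧
      (∀ x, ∃ y, y ^ (q + 1) = eval x κ) := by
  obtain ⟨κ, hκ, hκe⟩ := h.powsum hI (q + 1)
  have hQ : ∀ a : F, (a ^ q) ^ q = a := by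
    intro a
    rw [← pow_mul, ← pow_two, ← hF, FiniteField.pow_card]
  have h1 : ∀ x, (colU U (b2 + x • b0) t).card = 1 →
      eval x κ = 0 ∧ ∀ y, U (b2 + x • b0 + y • t) ↔ y ^ (q + 1) = eval x κ := by
    intro x hx
    obtain ⟨y0, hy0⟩ := Finset.card_eq_one.1 hx
    have hG := hN X (natDegree_X_le.trans (by omega)) x
    rw [hy0] at hG
    simp at hG
    subst hG
    have e : eval x κ = 0 := by
      rw [hκe, hy0]; simp
    refine ⟨e, fun y => ?_⟩
    have := mem_colU (U := U) (b := b2 + x • b0) (t := t) (y := y)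
    rw [e, ← this, hy0]
    simp
  have h2 : ∀ x, (colU U (b2 + x • b0) t).card = q + 1 →
      ∀ y, U (b2 + x • b0 + y • t) ↔ y ^ (q + 1) = eval x κ := by
    intro x hx
    obtain ⟨k, hk, hk2⟩ := h.sec_alg hq hF frob hI ht hN x hx
    have e : eval x κ = k := by
      rw [hκe, Finset.sum_congr rfl (g := fun _ => k)]
      · rw [Finset.sum_const, hx]
        simp [hq0]
      · intro y hy
        rw [← hk2]; exact mem_colU.1 hy
    rw [e]; exact hk2
  have h3 : ∀ x : F, (colU U (b2 + x • b0) t).card = 1 ∨ (colU U (b2 + x • b0) t).card = q + 1 := by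
    intro x
    have := hI.shear 0 0 x
    simp only [zero_smul, add_zero] at this
    exact h.two b0 t _ this ht
  have h4 : ∀ x y, U (b2 + x • b0 + y • t) ↔ y ^ (q + 1) = eval x κ := by
    intro x
    rcases h3 x with hx | hx
    · exact (h1 x hx).2
    · exact h2 x hx
  have h5 : ∀ x, ∃ y, y ^ (q + 1) = eval x κ := by
    intro x
    have : 0 < (colU U (b2 + x • b0) t).card := by rcases h3 x with hx | hx <;> omega
    obtain ⟨y, hy⟩ := Finset.card_pos.1 this
    exact ⟨y, (h4 x y).1 (mem_colU.1 hy)⟩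
  refine ⟨κ, hκ, h4, fun x => ?_, fun x hx => (h1 x hx).1, h5⟩
  obtain ⟨y, hy⟩ := h5 x
  rw [← hy, pow_succ, mul_pow, hQ]
  ring

theorem herm_poly {q : ℕ} (hq : 3 ≤ q) (hF : Fintype.card F = q ^ 2)
    (frob : ∀ a b : F, (a + b) ^ q = a ^ q + b ^ q) (κ : F[X]) (hκ : κ.natDegree ≤ q + 1)
    (hκq : ∀ x, (eval x κ) ^ q = eval x κ) :
    ∃ k3 k2 k0 : F, k3 ^ q = k3 ∧ k0 ^ q = k0 ∧
      ∀ x, eval x κ = k3 * x ^ (q + 1) + k2 * x ^ q + k2 ^ q * x + k0 := by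
  have hQ : ∀ a : F, (a ^ q) ^ q = a := by
    intro a
    rw [← pow_mul, ← pow_two, ← hF, FiniteField.pow_card]
  let φ : F →+* F := ⟨⟨⟨fun a => a ^ q, one_pow q⟩, fun a b => mul_pow a b q⟩, zero_pow (by omega), frob⟩
  have hφ : ∀ a, φ a = a ^ q := fun a => rfl
  set P' : F[X] := ∑ i ∈ range q, C (κ.coeff i ^ q) * X ^ (i * q) + C (κ.coeff q ^ q) * X
    + C (κ.coeff (q + 1) ^ q) * X ^ (q + 1) with hP'
  have hev : ∀ x, eval x P' = eval x κ := by
    intro x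
    rw [← hκq x, Polynomial.eval_eq_sum_range' (show κ.natDegree < q + 2 by omega), ← hφ, map_sum]
    rw [Finset.sum_range_succ, Finset.sum_range_succ, hP']
    simp only [eval_add, eval_finsetSum, eval_mul, eval_C, eval_pow, eval_X, hφ, mul_pow]
    have e1 : (x ^ (q + 1)) ^ q = x ^ (q + 1) := by rw [pow_succ, mul_pow, hQ, mul_comm]
    rw [hQ x, e1]
    congr 2
    apply Finset.sum_congr rfl
    intro i _
    rw [pow_mul]
  have hd : P'.natDegree < q ^ 2 := by
    have : P'.natDegree ≤ q ^ 2 - q := by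
      have hqq : q + 1 ≤ q ^ 2 - q := by
        have : q + 1 + q ≤ q ^ 2 := by nlinarith
        omega
      refine (natDegree_add_le _ _).trans (max_le ((natDegree_add_le _ _).trans (max_le ?_ ?_)) ?_)
      · apply natDegree_sum_le_of_forall_le
        intro i hi
        refine (natDegree_C_mul_X_pow_le _ _).trans ?_
        have hi' : i + 1 ≤ q := by simpa using hi
        have := Nat.mul_le_mul_right q hi'
        rw [add_mul, one_mul, ← pow_two] at this
        omega
      · exact (natDegree_C_mul_le _ _).trans (natDegree_X_le.trans (by omega))
      · exact (natDegree_C_mul_X_pow_le _ _).trans hqq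
    have : 0 < q ^ 2 - q := by
      have : q < q ^ 2 := by nlinarith
      omega
    omega
  have hPκ : κ = P' := by
    apply Polynomial.eq_of_degree_sub_lt_of_eval_finset_eq (univ : Finset F)
    · rw [Finset.card_univ, hF]
      refine lt_of_le_of_lt degree_le_natDegree ?_
      have h1 : (κ - P').natDegree < q ^ 2 := by
        refine lt_of_le_of_lt (natDegree_sub_le _ _) (max_lt ?_ hd)
        nlinarith
      exact_mod_cast h1
    · intro x _
      exact (hev x).symm
  have hco : ∀ j, κ.coeff j = (∑ i ∈ range q, if j = i * q then κ.coeff i ^ q else 0)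
      + (if j = 1 then κ.coeff q ^ q else 0) + (if j = q + 1 then κ.coeff (q + 1) ^ q else 0) := by
    intro j
    conv_lhs => rw [hPκ, hP']
    simp only [coeff_add, finsetSum_coeff, coeff_C_mul, coeff_X_pow, coeff_X]
    simp only [mul_ite, mul_one, mul_zero, eq_comm]
  have hnd : ∀ j, ¬ q ∣ j → (∑ i ∈ range q, if j = i * q then κ.coeff i ^ q else 0) = 0 := by
    intro j hj
    apply Finset.sum_eq_zero
    intro i _
    rw [if_neg]
    rintro rfl
    exact hj (dvd_mul_left _ _)
  have c0 : κ.coeff 0 ^ q = κ.coeff 0 := by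
    have := hco 0
    rw [Finset.sum_eq_single 0] at this
    · simpa using this.symm
    · intro i _ hi
      rw [if_neg]
      intro h
      rcases Nat.mul_eq_zero.1 h.symm with h | h <;> omega
    · simp; omega
  have c3 : κ.coeff (q + 1) ^ q = κ.coeff (q + 1) := by
    have := hco (q + 1)
    rw [hnd, if_neg (by omega), if_pos rfl] at this
    · simpa using this.symm
    · intro h
      have := (Nat.dvd_add_right (dvd_refl q)).1 h
      have := Nat.le_of_dvd (by omega) this
      omega
  have c1 : κ.coeff q ^ q = κ.coeff 1 := by
    have := hco 1
    rw [hnd, if_pos rfl, if_neg (by omega)] at this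
    · simpa using this.symm
    · intro h
      have := Nat.le_of_dvd (by omega) h
      omega
  have cj : ∀ j, 2 ≤ j → j < q → κ.coeff j = 0 := by
    intro j h2 h3
    have := hco j
    rw [hnd, if_neg (by omega), if_neg (by omega)] at this
    · simpa using this
    · intro h
      have := Nat.le_of_dvd (by omega) h
      omega
  refine ⟨κ.coeff (q + 1), κ.coeff q, κ.coeff 0, c3, c0, fun x => ?_⟩
  rw [Polynomial.eval_eq_sum_range' (show κ.natDegree < q + 2 by omega), c1]
  rw [Finset.sum_range_succ, Finset.sum_range_succ]
  obtain ⟨q', rfl⟩ : ∃ q', q = q' + 2 := ⟨q - 2, by omega⟩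
  rw [Finset.sum_range_succ', Finset.sum_range_succ']
  rw [Finset.sum_eq_zero]
  · simp only [zero_add, pow_zero, pow_one, mul_one]
    ring
  · intro i hi
    rw [cj _ (by omega) (by simp at hi; omega), zero_mul]

end
end QH

namespace QH
open Finset Polynomial Matrix

section
variable {F : Type*} [Field F] [Fintype F] [DecidableEq F]

theorem Unital.hermitian {q : ℕ} {U : (Fin 3 → F) → Prop} (h : Unital q U) (hq : 4 < q)
    (hF : Fintype.card F = q ^ 2) (frob : ∀ a b : F, (a + b) ^ q = a ^ q + b ^ q) (hq0 : (q : F) = 0) :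
    ∃ b0 t b2, Ind3 b0 t b2 ∧ ∃ A : Matrix (Fin 3) (Fin 3) F, IsUnit A.det ∧
      Aᵀ = A.map (fun a => a ^ q) ∧ ∀ v : Fin 3 → F, v ≠ 0 →
        (U (v 0 • b0 + v 1 • t + v 2 • b2) ↔ ∑ i, ∑ j, v i * A i j * (v j) ^ q = 0) := by
  have hQ : ∀ a : F, (a ^ q) ^ q = a := by
    intro a
    rw [← pow_mul, ← pow_two, ← hF, FiniteField.pow_card]
  -- choose a good frame
  obtain ⟨b0, t, b2, hI, ht, hs0, hs2, hN⟩ : ∃ b0 t b2, Ind3 b0 t b2 ∧ ¬ U t ∧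
      (colU U b0 t).card = q + 1 ∧ (colU U b2 t).card = q + 1 ∧ Normd q U b0 t b2 := by
    obtain ⟨c0, t, c2, hI, ht⟩ := h.ex
    obtain ⟨d0, hI0, hs0⟩ := h.sec c0 t c2 hI ht
    obtain ⟨d2, hI2, hs2⟩ := h.sec c2 t d0 hI0.swap ht
    obtain ⟨l0, l1, hl⟩ := h.norm (by omega) hI2.swap ht hs0
    refine ⟨d0 + l1 • t, t, d2 + l0 • t, ?_, ht, ?_, ?_, hl⟩
    · have := hI2.swap.shear l1 l0 0
      simpa using this
    · rw [colU_shift_card, hs0]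
    · rw [colU_shift_card, hs2]
  obtain ⟨κ, hκd, hκ, hκq, hκ1, hκe⟩ := h.chart (by omega) hF frob hq0 hI ht hN
  obtain ⟨k3, k2, k0, hk3, hk0, hk⟩ := herm_poly (by omega) hF frob κ hκd hκq
  -- the second chart
  have inv1 : ∀ z : F, z ≠ 0 → ∀ y, U (b0 + z • b2 + y • t) ↔ U (b2 + z⁻¹ • b0 + (z⁻¹ * y) • t) := by
    intro z hz y
    rw [← h.smul z hz _ (hI.ne2 _ _)]
    have e : z • (b2 + z⁻¹ • b0 + (z⁻¹ * y) • t) = b0 + z • b2 + y • t := by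
      rw [smul_add, smul_add, smul_smul, smul_smul, ← mul_assoc, mul_inv_cancel₀ hz, one_smul, one_mul]
      abel
    rw [e]
  have hN2 : Normd q U b2 t b0 := by
    obtain ⟨l0, l1, hl⟩ := h.lin (by omega) hI.swap ht hs2
    have hz0 : ∀ z : F, z ≠ 0 → l0 + l1 * z = 0 := by
      intro z hz
      have h1 := hl X (natDegree_X_le.trans (by omega)) z
      simp only [eval_X] at h1
      rw [← h1]
      have h2 := hN X (natDegree_X_le.trans (by omega)) z⁻¹
      simp only [eval_X] at h2
      have : colU U (b0 + z • b2) t = (colU U (b2 + z⁻¹ • b0) t).image (fun y => z * y) := by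
        ext y
        simp only [mem_colU, mem_image]
        rw [inv1 z hz]
        constructor
        · intro hy
          exact ⟨_, hy, by rw [← mul_assoc, mul_inv_cancel₀ hz, one_mul]⟩
        · rintro ⟨w, hw, rfl⟩
          rwa [← mul_assoc, inv_mul_cancel₀ hz, one_mul]
      rw [this, Finset.sum_image (fun a _ b _ hab => mul_left_cancel₀ hz hab), ← Finset.mul_sum, h2, mul_zero]
    obtain ⟨z, hz⟩ : ∃ z : F, z ∉ ({0, 1} : Finset F) := by
      by_contra! hc
      have h1 : (univ : Finset F).card ≤ ({0, 1} : Finset F).card :=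
        Finset.card_le_card (fun z _ => hc z)
      rw [Finset.card_univ, hF] at h1
      have := h1.trans Finset.card_le_two
      nlinarith
    simp only [mem_insert, mem_singleton, not_or] at hz
    have e1 := hz0 1 one_ne_zero
    have e2 := hz0 z hz.1
    have e3 : l1 * (z - 1) = 0 := by linear_combination e2 - e1
    have hl1 : l1 = 0 := (mul_eq_zero.1 e3).resolve_right (sub_ne_zero.2 hz.2)
    have hl0 : l0 = 0 := by rw [hl1] at e1; simpa using e1
    intro G hG x
    rw [hl G hG x, hl0, hl1]
    simp
  obtain ⟨κ', hκd', hκ', hκq', hκ1', hκe'⟩ := h.chart (by omega) hF frob hq0 hI.swap ht hN2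
  have hK' : κ' = C k3 + C k2 * X + C (k2 ^ q) * X ^ q + C k0 * X ^ (q + 1) := by
    apply Polynomial.eq_of_degree_sub_lt_of_eval_finset_eq ((univ : Finset F).erase 0)
    · rw [Finset.card_erase_of_mem (mem_univ _), Finset.card_univ, hF]
      refine lt_of_le_of_lt degree_le_natDegree ?_
      have h1 : (κ' - (C k3 + C k2 * X + C (k2 ^ q) * X ^ q + C k0 * X ^ (q + 1))).natDegree ≤ q + 1 := by
        refine (natDegree_sub_le _ _).trans (max_le hκd' ((natDegree_add_le _ _).trans (max_le
          ((natDegree_add_le _ _).trans (max_le ((natDegree_add_le _ _).trans (max_le ?_ ?_)) ?_)) ?_)))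
        · exact (natDegree_C _).le.trans (Nat.zero_le _)
        · exact (natDegree_C_mul_le _ _).trans (natDegree_X_le.trans (by omega))
        · exact (natDegree_C_mul_X_pow_le _ _).trans (by omega)
        · exact (natDegree_C_mul_X_pow_le _ _)
      have h2 : q + 1 < q ^ 2 - 1 := by
        have : q + 2 < q ^ 2 := by nlinarith
        omega
      exact_mod_cast lt_of_le_of_lt h1 h2
    · intro z hz
      have hz0 : z ≠ 0 := (mem_erase.1 hz).1
      obtain ⟨y, hy⟩ := hκe' z
      have h1 := (hκ _ _).1 ((inv1 z hz0 y).1 ((hκ' z y).2 hy))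
      rw [hk, mul_pow, hy] at h1
      have h2 : (z ^ (q + 1)) * (z⁻¹ ^ (q + 1) * eval z κ') = eval z κ' := by
        rw [← mul_assoc, ← mul_pow, mul_inv_cancel₀ hz0, one_pow, one_mul]
      rw [← h2, h1]
      simp only [eval_add, eval_mul, eval_C, eval_pow, eval_X]
      have e1 : z ^ (q + 1) * z⁻¹ ^ (q + 1) = 1 := by rw [← mul_pow, mul_inv_cancel₀ hz0, one_pow]
      have e2 : z ^ (q + 1) * z⁻¹ ^ q = z := by
        rw [pow_succ, mul_assoc, mul_comm z, ← mul_assoc, ← mul_pow, mul_inv_cancel₀ hz0, one_pow, one_mul]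
      have e3 : z ^ (q + 1) * z⁻¹ = z ^ q := by
        rw [pow_succ, mul_assoc, mul_inv_cancel₀ hz0, mul_one]
      linear_combination k3 * e1 + k2 * e2 + k2 ^ q * e3
  have hU0 : ∀ y, U (b0 + y • t) ↔ y ^ (q + 1) = k3 := by
    intro y
    have := hκ' 0 y
    rw [zero_smul, add_zero, hK'] at this
    rw [this]
    have : (0 : F) ^ q = 0 := zero_pow (by omega)
    simp [this]
  have hfull : ∀ x y z : F, ¬ (x = 0 ∧ y = 0 ∧ z = 0) → (U (x • b0 + y • t + z • b2) ↔
      y ^ (q + 1) = k3 * x ^ (q + 1) + k2 * x ^ q * z + k2 ^ q * x * z ^ q + k0 * z ^ (q + 1)) := by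
    intro x y z hxyz
    by_cases hz : z = 0
    · subst hz
      have hzq : (0 : F) ^ q = 0 := zero_pow (by omega)
      by_cases hx : x = 0
      · subst hx
        have hy : y ≠ 0 := fun hy => hxyz ⟨rfl, hy, rfl⟩
        have htne : t ≠ 0 := by
          have := hI.ne 0 1 0 (by simp)
          simpa using this
        have e : (0 : F) • b0 + y • t + (0 : F) • b2 = y • t := by module
        rw [e, h.smul y hy t htne]
        simp [ht, hy, hzq]
      · have hne : b0 + (x⁻¹ * y) • t ≠ 0 := by
          have := hI.ne 1 (x⁻¹ * y) 0 (by simp)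
          simpa using this
        have e : x • b0 + y • t + (0 : F) • b2 = x • (b0 + (x⁻¹ * y) • t) := by
          rw [smul_add, smul_smul, ← mul_assoc, mul_inv_cancel₀ hx, one_mul, zero_smul, add_zero]
        rw [e, h.smul x hx _ hne, hU0, mul_pow]
        have e1 : x ^ (q + 1) * x⁻¹ ^ (q + 1) = 1 := by rw [← mul_pow, mul_inv_cancel₀ hx, one_pow]
        have e2 : x ^ (q + 1) ≠ 0 := pow_ne_zero _ hx
        rw [← mul_right_inj' e2, ← mul_assoc, e1, hzq]
        simp [mul_comm]
    · have e : x • b0 + y • t + z • b2 = z • (b2 + (z⁻¹ * x) • b0 + (z⁻¹ * y) • t) := by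
        rw [smul_add, smul_add, smul_smul, smul_smul, ← mul_assoc, ← mul_assoc, mul_inv_cancel₀ hz, one_mul, one_mul]
        abel
      rw [e, h.smul z hz _ (hI.ne2 _ _), hκ, hk]
      have hz2 : z ^ (q + 1) ≠ 0 := pow_ne_zero _ hz
      rw [← mul_right_inj' hz2]
      have e1 : z ^ (q + 1) * z⁻¹ ^ (q + 1) = 1 := by rw [← mul_pow, mul_inv_cancel₀ hz, one_pow]
      have e2 : z ^ (q + 1) * z⁻¹ ^ q = z := by
        rw [pow_succ, mul_assoc, mul_comm z, ← mul_assoc, ← mul_pow, mul_inv_cancel₀ hz, one_pow, one_mul]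
      have e3 : z ^ (q + 1) * z⁻¹ = z ^ q := by
        rw [pow_succ, mul_assoc, mul_inv_cancel₀ hz, mul_one]
      have l1 : z ^ (q + 1) * (z⁻¹ * y) ^ (q + 1) = y ^ (q + 1) := by
        rw [mul_pow, ← mul_assoc, e1, one_mul]
      have l2 : z ^ (q + 1) * (k3 * (z⁻¹ * x) ^ (q + 1) + k2 * (z⁻¹ * x) ^ q + k2 ^ q * (z⁻¹ * x) + k0) =
          k3 * x ^ (q + 1) + k2 * x ^ q * z + k2 ^ q * x * z ^ q + k0 * z ^ (q + 1) := by
        rw [mul_pow, mul_pow]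
        linear_combination k3 * x ^ (q + 1) * e1 + k2 * x ^ q * e2 + k2 ^ q * x * e3
      rw [l1, l2]
  have hk3ne : k3 ≠ 0 := by
    intro h3
    have : colU U b0 t ⊆ {0} := by
      intro y hy
      have := (hU0 y).1 (mem_colU.1 hy)
      rw [h3] at this
      simpa using this
    have := Finset.card_le_card this
    rw [hs0, card_singleton] at this
    omega
  have hdet : k3 * k0 - k2 * k2 ^ q ≠ 0 := by
    intro hd
    have hT := h.tang b0 t b2 hI ht hs0
    have : univ.filter (fun x : F => (colU U (b2 + x • b0) t).card = 1) ⊆ {- (k3⁻¹ * k2)} := by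
      intro x hx
      rw [mem_filter] at hx
      have h1 := hκ1 x hx.2
      rw [hk] at h1
      have h2 : (k3 * x + k2) ^ (q + 1) = 0 := by
        rw [pow_succ, frob, mul_pow, hk3]
        linear_combination k3 * h1 - hd
      have h3 : k3 * x + k2 = 0 := by simpa using h2
      rw [mem_singleton]
      have : k3 * x = -k2 := by linear_combination h3
      rw [← mul_neg, ← this, ← mul_assoc, inv_mul_cancel₀ hk3ne, one_mul]
    have := Finset.card_le_card this
    rw [hT, card_singleton] at this
    omega
  have hm1 : (-1 : F) ^ q = -1 := by
    have := frob (-1) 1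
    rw [neg_add_cancel, zero_pow (by omega), one_pow] at this
    linear_combination -this
  have hzq : (0 : F) ^ q = 0 := zero_pow (by omega)
  refine ⟨b0, t, b2, hI, !![k3, 0, k2 ^ q; 0, -1, 0; k2, 0, k0], ?_, ?_, ?_⟩
  · rw [isUnit_iff_ne_zero, Matrix.det_fin_three]
    simp
    intro h0
    apply hdet
    linear_combination -h0
  · ext i j
    fin_cases i <;> fin_cases j <;> simp [hk3, hk0, hQ, hm1, hzq]
  · intro v hv
    rw [hfull]
    · simp [Fin.sum_univ_three]
      constructor
      · intro h1
        linear_combination -h1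
      · intro h1
        linear_combination -h1
    · rintro ⟨h0, h1, h2⟩
      apply hv
      ext i
      fin_cases i <;> simp [h0, h1, h2]

end
end QH

namespace QH
open Finset Polynomial Matrix LinearAlgebra.Projectivization
open scoped LinearAlgebra.Projectivization

section
variable {F : Type*} [Field F] [Fintype F] [DecidableEq F]

theorem card_pts : Fintype.card (ℙ F (Fin 3 → F)) = 1 + (Fintype.card F + Fintype.card F * Fintype.card F) := by
  have h2 := Projectivization.card_of_finrank F (Fin 3 → F) (n := 3) (by simp)
  rw [Nat.card_eq_fintype_card] at h2
  simp only [Finset.sum_range_succ, Finset.sum_range_zero, Nat.card_eq_fintype_card] at h2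
  rw [h2]; ring

/-- normalized coordinates -/
def coo : Unit ⊕ (F ⊕ F × F) → F × F × F
  | Sum.inl _ => (0, 1, 0)
  | Sum.inr (Sum.inl y) => (1, y, 0)
  | Sum.inr (Sum.inr z) => (z.1, z.2, 1)

def vecOf (b0 t b2 : Fin 3 → F) (s : Unit ⊕ (F ⊕ F × F)) : Fin 3 → F :=
  (coo s).1 • b0 + (coo s).2.1 • t + (coo s).2.2 • b2

theorem vecOf_ne {b0 t b2 : Fin 3 → F} (h : Ind3 b0 t b2) (s : Unit ⊕ (F ⊕ F × F)) : vecOf b0 t b2 s ≠ 0 := by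
  apply h.ne
  rcases s with _ | y | z <;> simp [coo]

noncomputable def ptOf {b0 t b2 : Fin 3 → F} (h : Ind3 b0 t b2) (s : Unit ⊕ (F ⊕ F × F)) : ℙ F (Fin 3 → F) :=
  Projectivization.mk F (vecOf b0 t b2 s) (vecOf_ne h s)

theorem ptOf_inj {b0 t b2 : Fin 3 → F} (h : Ind3 b0 t b2) : Function.Injective (ptOf h) := by
  intro s s' hs
  rw [ptOf, ptOf, Projectivization.mk_eq_mk_iff'] at hs
  obtain ⟨a, ha⟩ := hs
  obtain ⟨h1, h2, h3⟩ := h (a * (coo s').1 - (coo s).1) (a * (coo s').2.1 - (coo s).2.1)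
    (a * (coo s').2.2 - (coo s).2.2) (by
      have : a • vecOf b0 t b2 s' - vecOf b0 t b2 s = 0 := sub_eq_zero.2 ha
      rw [← this, vecOf, vecOf]; module)
  rcases s with _ | y | ⟨x, y⟩ <;> rcases s' with _ | y' | ⟨x', y'⟩ <;>
    simp [coo, sub_eq_zero] at h1 h2 h3 ⊢
  all_goals first
    | (subst h1; simpa using h2.symm)
    | (subst h3; simp at h1 h2; exact ⟨h1.symm, h2.symm⟩)
    | (subst h3; simp at h1 h2)
    | simp_all

theorem ptOf_bij {b0 t b2 : Fin 3 → F} (h : Ind3 b0 t b2) : Function.Bijective (ptOf h) := by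
  rw [Fintype.bijective_iff_injective_and_card]
  refine ⟨ptOf_inj h, ?_⟩
  rw [card_pts]
  simp

theorem unital_of_plane {q : ℕ} (hq : 4 < q) (hF : Fintype.card F = q ^ 2) (f : (Fin 3 → F) → F)
    (hf : f ∈ vcode F) (B : Finset (ℙ F (Fin 3 → F)))
    (hfB : ∀ v (hv : v ≠ 0), f v = if Projectivization.mk F v hv ∈ B then 1 else 0)
    (hc : B.card = q ^ 3 + 1) (hl : ∀ l, (B ∩ lnp F l).card = 1 ∨ (B ∩ lnp F l).card = q + 1) :
    Unital q (fun v => ∃ hv : v ≠ 0, Projectivization.mk F v hv ∈ B) := by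
  classical
  set U : (Fin 3 → F) → Prop := fun v => ∃ hv : v ≠ 0, Projectivization.mk F v hv ∈ B with hU
  have hUmk : ∀ v (hv : v ≠ 0), U v ↔ Projectivization.mk F v hv ∈ B := by
    intro v hv
    exact ⟨fun ⟨_, h⟩ => h, fun h => ⟨hv, h⟩⟩
  have hpt : ∀ {b0 t b2 : Fin 3 → F} (h : Ind3 b0 t b2) s, ptOf h s ∈ B ↔ U (vecOf b0 t b2 s) := by
    intro b0 t b2 h s
    rw [hUmk _ (vecOf_ne h s)]; rfl
  have two : ∀ b0 t b2, Ind3 b0 t b2 → ¬ U t → (colU U b2 t).card = 1 ∨ (colU U b2 t).card = q + 1 := by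
    intro b0 t b2 hI ht
    -- the line through t and b2
    obtain ⟨g, hgn, hgs⟩ : ∃ g : Option F → ℙ F (Fin 3 → F), g none = ptOf hI (Sum.inl ()) ∧
        ∀ y, g (some y) = ptOf hI (Sum.inr (Sum.inr (0, y))) :=
      ⟨fun o => match o with
        | none => ptOf hI (Sum.inl ())
        | some y => ptOf hI (Sum.inr (Sum.inr (0, y))), rfl, fun _ => rfl⟩
    have hg : Function.Injective g := by
      intro o o' h
      rcases o with _ | y <;> rcases o' with _ | y' <;> simp only [hgn, hgs] at h
      · rfl
      · have := ptOf_inj hI h; simp at this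
      · have := ptOf_inj hI h; simp at this
      · have := ptOf_inj hI h; simp at this; rw [this]
    obtain ⟨l, hl1, hl2⟩ := (pplane (F := F)).join (g none) (g (some 0)) (fun h => by simpa using hg h)
    have hv1 : vecOf b0 t b2 (Sum.inl ()) = t := by simp [vecOf, coo]
    have hv2 : ∀ y, vecOf b0 t b2 (Sum.inr (Sum.inr (0, y))) = b2 + y • t := by
      intro y; simp [vecOf, coo, add_comm]
    have d1 : t ⬝ᵥ l.rep = 0 := by
      rw [hgn] at hl1
      have := (mem_lnp_mk' _ _).1 hl1
      rwa [hv1] at this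
    have d2 : b2 ⬝ᵥ l.rep = 0 := by
      rw [hgs] at hl2
      have := (mem_lnp_mk' _ _).1 hl2
      rwa [hv2, zero_smul, add_zero] at this
    have himg : univ.image g = lnp F l := by
      apply Finset.eq_of_subset_of_card_le
      · intro P hP
        simp only [mem_image, mem_univ, true_and] at hP
        obtain ⟨o, rfl⟩ := hP
        rcases o with _ | y
        · exact hl1
        · rw [hgs]
          refine (mem_lnp_mk' _ _).2 ?_
          rw [hv2, add_dotProduct, smul_dotProduct, d1, d2]; simp
      · rw [Finset.card_image_of_injective _ hg, (pplane (F := F)).cardl]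
        simp
    have hcol : (B ∩ lnp F l) = (colU U b2 t).image (fun y => g (some y)) := by
      ext P
      rw [← himg]
      simp only [mem_inter, mem_image, mem_univ, true_and, mem_colU]
      constructor
      · rintro ⟨hB, o, rfl⟩
        rcases o with _ | y
        · rw [hgn] at hB
          exact absurd ((hpt hI _).1 hB) (by rw [hv1]; exact ht)
        · refine ⟨y, ?_, rfl⟩
          rw [hgs] at hB
          have := (hpt hI _).1 hB
          rwa [hv2] at this
      · rintro ⟨y, hy, rfl⟩
        refine ⟨?_, _, rfl⟩
        rw [hgs, hpt hI]
        rwa [hv2]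
    have hcc : (B ∩ lnp F l).card = (colU U b2 t).card := by
      rw [hcol, Finset.card_image_of_injective]
      intro y y' h
      simpa using hg h
    rw [← hcc]; exact hl l
  have tot : ∀ b0 t b2, Ind3 b0 t b2 → ¬ U t →
      (colU U b0 t).card + ∑ x : F, (colU U (b2 + x • b0) t).card = q ^ 3 + 1 := by
    intro b0 t b2 hI ht
    have h1 : B.card = ∑ P, if P ∈ B then 1 else 0 := by simp
    rw [← (ptOf_bij hI).sum_comp, Fintype.sum_sum_type, Fintype.sum_sum_type, Fintype.sum_prod_type] at h1
    simp only [hpt hI] at h1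
    simp only [vecOf, coo, Finset.univ_unique, Finset.sum_singleton, zero_smul, one_smul, zero_add, add_zero,
      ht, if_false] at h1
    rw [← hc, h1]
    congr 1
    · rw [colU, Finset.card_filter]
      apply Finset.sum_congr rfl
      intro y _
      congr
    · apply Finset.sum_congr rfl
      intro x _
      rw [colU, Finset.card_filter]
      apply Finset.sum_congr rfl
      intro y _
      have : b2 + x • b0 + y • t = x • b0 + y • t + b2 := by abel
      rw [this]
      congr
  have two' : ∀ b0 t b2, Ind3 b0 t b2 → ¬ U t → ∀ x : F,
      (colU U (b2 + x • b0) t).card = 1 ∨ (colU U (b2 + x • b0) t).card = q + 1 := by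
    intro b0 t b2 hI ht x
    have := hI.shear 0 0 x
    simp only [zero_smul, add_zero] at this
    exact two _ _ _ this ht
  -- number of secants in the affine part
  have cnt : ∀ b0 t b2, Ind3 b0 t b2 → ¬ U t → 
      (colU U b0 t).card + (q ^ 2 + q * (univ.filter (fun x : F => (colU U (b2 + x • b0) t).card = q + 1)).card) = q ^ 3 + 1 ∧
      (univ.filter (fun x : F => (colU U (b2 + x • b0) t).card = 1)).card
       + (univ.filter (fun x : F => (colU U (b2 + x • b0) t).card = q + 1)).card = q ^ 2 := by
    intro b0 t b2 hI ht
    constructor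
    · rw [← tot b0 t b2 hI ht]
      congr 1
      rw [← hF, ← Finset.card_univ, Finset.card_filter, Finset.mul_sum, Finset.card_eq_sum_ones, ← Finset.sum_add_distrib]
      apply Finset.sum_congr rfl
      intro x _
      rcases two' b0 t b2 hI ht x with h | h <;> rw [h]
      · rw [if_neg (by omega)]; simp
      · rw [if_pos rfl]; omega
    · rw [← hF, ← Finset.card_univ, ← Finset.card_union_of_disjoint]
      · congr 1
        ext x
        simpa using two' b0 t b2 hI ht x
      · rw [Finset.disjoint_filter]
        intro x _ h1 h2
        omega
  refine ⟨⟨f, hf, ?_⟩, two, ?_, ?_, ?_⟩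
  · intro v hv
    rw [hfB v hv]
    simp only [hUmk v hv]
  · intro b0 t b2 hI ht hs
    obtain ⟨h1, h2⟩ := cnt b0 t b2 hI ht
    rw [hs] at h1
    have h3 : (univ.filter (fun x : F => (colU U (b2 + x • b0) t).card = q + 1)).card + q + 1 = q ^ 2 := by
      have : q * ((univ.filter (fun x : F => (colU U (b2 + x • b0) t).card = q + 1)).card + q + 1) = q * q ^ 2 := by
        nlinarith
      exact Nat.eq_of_mul_eq_mul_left (by omega) this
    omega
  · intro b0 t b2 hI ht
    obtain ⟨h1, h2⟩ := cnt b0 t b2 hI ht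
    by_cases hs : (colU U b0 t).card = q + 1
    · exact ⟨b0, hI, hs⟩
    · have h0 : (colU U b0 t).card = 1 := (two _ _ _ hI.swap ht).resolve_right hs
      rw [h0] at h1
      have h3 : 1 < (univ.filter (fun x : F => (colU U (b2 + x • b0) t).card = q + 1)).card := by
        by_contra hle
        push Not at hle
        have : q * (univ.filter (fun x : F => (colU U (b2 + x • b0) t).card = q + 1)).card ≤ q * 1 :=
          Nat.mul_le_mul_left _ hle
        nlinarith
      obtain ⟨x, hx, hx0⟩ := Finset.exists_mem_ne h3 0
      refine ⟨b2 + x • b0, ?_, (mem_filter.1 hx).2⟩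
      intro a b c habc
      obtain ⟨e1, e2, e3⟩ := hI (a * x) b (a + c) (by rw [← habc]; module)
      have ha : a = 0 := (mul_eq_zero.1 e1).resolve_right hx0
      subst ha
      exact ⟨rfl, e2, by simpa using e3⟩
  · have : ∃ T : ℙ F (Fin 3 → F), T ∉ B := by
      by_contra! hcon
      have h1 : B = univ := by ext; simp [hcon]
      have h2 := card_pts (F := F)
      rw [← Finset.card_univ, ← h1, hc, hF] at h2
      nlinarith
    obtain ⟨T, hT⟩ := this
    have ht : ¬ U T.rep := by rw [hUmk _ T.rep_nonzero, T.mk_rep]; exact hT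
    obtain ⟨i, hi⟩ := Function.ne_iff.1 T.rep_nonzero
    set t := T.rep
    have key : ∀ (x y z : F) (b0 b2 : Fin 3 → F), x • b0 + y • t + z • b2 = 0 → 
        ∀ j, x * b0 j + y * t j + z * b2 j = 0 := by
      intro x y z b0 b2 h j
      have := congrFun h j
      simpa using this
    fin_cases i
    · refine ⟨Pi.single 1 1, t, Pi.single 2 1, ?_, ht⟩
      intro x y z h
      have k0 := key _ _ _ _ _ h 0
      have k1 := key _ _ _ _ _ h 1
      have k2 := key _ _ _ _ _ h 2
      simp at k0 k1 k2 hi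
      have hy : y = 0 := by tauto
      subst hy
      simp_all
    · refine ⟨Pi.single 0 1, t, Pi.single 2 1, ?_, ht⟩
      intro x y z h
      have k0 := key _ _ _ _ _ h 0
      have k1 := key _ _ _ _ _ h 1
      have k2 := key _ _ _ _ _ h 2
      simp at k0 k1 k2 hi
      have hy : y = 0 := by tauto
      subst hy
      simp_all
    · refine ⟨Pi.single 0 1, t, Pi.single 1 1, ?_, ht⟩
      intro x y z h
      have k0 := key _ _ _ _ _ h 0
      have k1 := key _ _ _ _ _ h 1
      have k2 := key _ _ _ _ _ h 2
      simp at k0 k1 k2 hi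
      have hy : y = 0 := by tauto
      subst hy
      simp_all

end
end QH

namespace QH
open Finset Module

section
variable {F : Type} [Field F] [Fintype F] [DecidableEq F] {n : ℕ}

/-- the vector `w` spans a point of `V` -/
def VS (V : Set (ProjPoint F n)) (w : Fin n → F) : Prop := w ≠ 0 ∧ ∃ P ∈ V, w ∈ P.1

noncomputable def pt (w : Fin n → F) (hw : w ≠ 0) : ProjPoint F n :=
  ⟨Submodule.span F {w}, finrank_span_singleton hw⟩

theorem eq_span_of_mem (P : ProjPoint F n) {w : Fin n → F} (hw : w ≠ 0) (h : w ∈ P.1) :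
    P.1 = Submodule.span F {w} := by
  symm
  apply Submodule.eq_of_le_of_finrank_eq
  · rw [Submodule.span_singleton_le_iff_mem]; exact h
  · rw [finrank_span_singleton hw, P.2]

theorem exists_gen (P : ProjPoint F n) : ∃ w, w ≠ 0 ∧ P.1 = Submodule.span F {w} := by
  have h : P.1 ≠ ⊥ := by
    intro h
    have := P.2
    rw [h, finrank_bot] at this
    omega
  obtain ⟨w, hw, hw0⟩ := Submodule.exists_mem_ne_zero_of_ne_bot h
  exact ⟨w, hw0, eq_span_of_mem P hw0 hw⟩

theorem pt_eq (P : ProjPoint F n) {w : Fin n → F} (hw : w ≠ 0) (h : w ∈ P.1) : pt w hw = P :=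
  Subtype.ext (eq_span_of_mem P hw h).symm

theorem VS_pt (V : Set (ProjPoint F n)) {w : Fin n → F} (hw : w ≠ 0) : VS V w ↔ pt w hw ∈ V := by
  constructor
  · rintro ⟨_, P, hP, h⟩
    rwa [pt_eq P hw h]
  · intro h
    exact ⟨hw, _, h, Submodule.mem_span_singleton_self w⟩

theorem VS_smul (V : Set (ProjPoint F n)) {w : Fin n → F} {a : F} (ha : a ≠ 0) : VS V (a • w) ↔ VS V w := by
  unfold VS
  simp only [ne_eq, smul_eq_zero, ha, false_or]
  constructor
  · rintro ⟨h, P, hP, hm⟩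
    exact ⟨h, P, hP, by simpa [ha] using P.1.smul_mem a⁻¹ hm⟩
  · rintro ⟨h, P, hP, hm⟩
    exact ⟨h, P, hP, P.1.smul_mem a hm⟩

instance : Finite (ProjPoint F n) := by unfold ProjPoint; infer_instance

open Classical in
theorem card_vec (V : Set (ProjPoint F n)) :
    (univ.filter (fun w : Fin n → F => VS V w)).card = (Fintype.card F - 1) * V.ncard := by
  haveI : Fintype (ProjPoint F n) := Fintype.ofFinite _
  have hV : V.ncard = (univ.filter (fun P => P ∈ V)).card := by
    rw [← Set.ncard_coe_finset]; simp
  rw [hV]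
  have h1 : univ.filter (fun w : Fin n → F => VS V w) =
      (univ.filter (fun P => P ∈ V)).biUnion (fun P => univ.filter (fun w => w ∈ P.1 ∧ w ≠ 0)) := by
    ext w
    simp only [mem_filter, mem_univ, true_and, mem_biUnion]
    unfold VS
    constructor
    · rintro ⟨h, P, hP, hm⟩
      exact ⟨P, hP, hm, h⟩
    · rintro ⟨P, hP, hm, h⟩
      exact ⟨h, P, hP, hm⟩
  rw [h1, Finset.card_biUnion]
  · rw [Finset.sum_const_nat (m := Fintype.card F - 1), mul_comm]
    intro P _
    have h2 : (univ.filter (fun w : Fin n → F => w ∈ P.1)).card = Fintype.card F := by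
      have h3 := Module.card_eq_pow_finrank (K := F) (V := P.1)
      rw [P.2, pow_one, Fintype.card_subtype] at h3
      convert h3 using 2
    have h4 : (univ.filter (fun w : Fin n → F => w ∈ P.1 ∧ w ≠ 0)) =
        (univ.filter (fun w : Fin n → F => w ∈ P.1)).erase 0 := by
      ext w
      simp [and_comm]
    rw [h4, Finset.card_erase_of_mem (by simp), h2]
  · intro P _ P' _ hne
    rw [Function.onFun, Finset.disjoint_left]
    intro w hw hw'
    simp only [mem_filter, mem_univ, true_and] at hw hw'
    exact hne ((pt_eq P hw.2 hw.1).symm.trans (pt_eq P' hw.2 hw'.1))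

open Classical in
theorem card_vec_in (V : Set (ProjPoint F n)) (W : Submodule F (Fin n → F)) :
    (univ.filter (fun w : Fin n → F => w ∈ W ∧ VS V w)).card = (Fintype.card F - 1) * secant F n V W := by
  rw [secant, ← card_vec]
  congr 1
  ext w
  simp only [mem_filter, mem_univ, true_and]
  constructor
  · rintro ⟨hW, h0, P, hP, hm⟩
    refine ⟨h0, P, ⟨hP, ?_⟩, hm⟩
    show P.1 ≤ W
    rw [eq_span_of_mem P h0 hm, Submodule.span_singleton_le_iff_mem]
    exact hW
  · rintro ⟨h0, P, ⟨hP, hPW⟩, hm⟩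
    exact ⟨hPW hm, h0, P, hP, hm⟩

open Classical in
theorem card_mem_sub (W : Submodule F (Fin n → F)) :
    (univ.filter (fun w : Fin n → F => w ∈ W)).card = Fintype.card F ^ finrank F W := by
  have h3 := Module.card_eq_pow_finrank (K := F) (V := W)
  rw [Fintype.card_subtype] at h3
  convert h3 using 2

theorem card_pointsIn (W : Submodule F (Fin n → F)) :
    (Fintype.card F - 1) * (pointsIn F n W).ncard + 1 = Fintype.card F ^ finrank F W := by
  classical
  rw [← card_vec, ← card_mem_sub W]
  have : (univ.filter (fun w : Fin n → F => w ∈ W)) =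
      insert 0 (univ.filter (fun w : Fin n → F => VS (pointsIn F n W) w)) := by
    ext w
    simp only [mem_filter, mem_univ, true_and, mem_insert]
    by_cases h : w = 0
    · simp [h]
    · rw [VS_pt _ h]
      simp only [h, false_or]
      show _ ↔ Submodule.span F {w} ≤ W
      rw [Submodule.span_singleton_le_iff_mem]
  rw [this, Finset.card_insert_of_notMem]
  rw [mem_filter]
  rintro ⟨_, h, _⟩
  exact h rfl

theorem card_pointsIn_zmod {p : ℕ} (hQ : ((Fintype.card F : ℕ) : ZMod p) = 0)
    (W : Submodule F (Fin n → F)) (hW : 1 ≤ finrank F W) :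
    ((pointsIn F n W).ncard : ZMod p) = 1 := by
  have h := card_pointsIn W
  have h1 : 1 ≤ Fintype.card F := Fintype.card_pos
  have h2 : (((Fintype.card F - 1) * (pointsIn F n W).ncard + 1 : ℕ) : ZMod p) = (Fintype.card F ^ finrank F W : ℕ) := by
    rw [h]
  push_cast [Nat.cast_sub h1] at h2
  rw [hQ, zero_pow (by omega)] at h2
  linear_combination -h2

theorem secant_zmod {p : ℕ} (hQ : ((Fintype.card F : ℕ) : ZMod p) = 0)
    (V : Set (ProjPoint F (n + 1))) (hV : charVec F p (n + 1) V ∈ hypCode F p (n + 1))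
    (hn : 1 ≤ n)
    (W : Submodule F (Fin (n + 1) → F)) (hW : 2 ≤ finrank F W) :
    ((secant F (n + 1) V W : ℕ) : ZMod p) = (V.ncard : ZMod p) := by
  classical
  haveI : Fintype (ProjPoint F (n + 1)) := Fintype.ofFinite _
  have key : ∀ S T : Set (ProjPoint F (n + 1)), ∑ P, (if P ∈ T then charVec F p (n + 1) S P else 0) =
      ((S ∩ T).ncard : ZMod p) := by
    intro S T
    have h1 : (S ∩ T).ncard = (univ.filter (fun P => P ∈ S ∩ T)).card := by
      rw [← Set.ncard_coe_finset]; congr 1; ext; simp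
    rw [h1, Finset.card_filter, Nat.cast_sum]
    apply Finset.sum_congr rfl
    intro P _
    by_cases h2 : P ∈ S <;> by_cases h3 : P ∈ T <;> simp [charVec, h2, h3]
  have main : ∀ c ∈ hypCode F p (n + 1), ∑ P, (if P ∈ pointsIn F (n + 1) W then c P else 0) = ∑ P, c P := by
    intro c hc
    induction hc using Submodule.span_induction with
    | mem c h =>
      obtain ⟨H, hH, rfl⟩ := h
      have h2 := key (pointsIn F (n + 1) H) Set.univ
      simp only [Set.mem_univ, if_true, Set.inter_univ] at h2
      rw [key, h2, card_pointsIn_zmod hQ H (by omega)]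
      have h3 : pointsIn F (n + 1) H ∩ pointsIn F (n + 1) W = pointsIn F (n + 1) (H ⊓ W) := by
        ext P
        simp [pointsIn]
      rw [h3, card_pointsIn_zmod hQ]
      have h4 := Submodule.finrank_sup_add_finrank_inf_eq H W
      have h5 := Submodule.finrank_le (H ⊔ W)
      rw [finrank_fin_fun] at h5
      omega
    | zero => simp
    | add c d _ _ hc hd =>
      simp only [Pi.add_apply, Finset.sum_add_distrib, ← hc, ← hd]
      rw [← Finset.sum_add_distrib]
      apply Finset.sum_congr rfl
      intro P _
      split_ifs <;> simp
    | smul a c _ hc =>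
      simp only [Pi.smul_apply, smul_eq_mul, ← Finset.mul_sum, ← hc]
      rw [Finset.mul_sum]
      apply Finset.sum_congr rfl
      intro P _
      split_ifs <;> simp
  have h1 := main _ hV
  have h2 := key V Set.univ
  simp only [Set.mem_univ, if_true, Set.inter_univ] at h2
  rw [key, h2] at h1
  exact h1

end
end QH

namespace QH
open Finset Module
open scoped LinearAlgebra.Projectivization

section
variable {F : Type} [Field F] [Fintype F] [DecidableEq F] {n : ℕ}

theorem exists_dual (H : Submodule F (Fin (n + 1) → F)) (hH : finrank F H = n) :
    ∃ ψ : (Fin (n + 1) → F) →ₗ[F] F, LinearMap.ker ψ = H := by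
  have hlt : H < ⊤ := by
    rw [lt_top_iff_ne_top]
    rintro rfl
    rw [finrank_top, finrank_fin_fun] at hH
    omega
  obtain ⟨ψ, hψ, hle⟩ := Submodule.exists_le_ker_of_lt_top H hlt
  refine ⟨ψ, (Submodule.eq_of_le_of_finrank_eq hle ?_).symm⟩
  have h1 := LinearMap.finrank_range_add_finrank_ker ψ
  have h2 : LinearMap.range ψ = ⊤ := LinearMap.range_eq_top.2 (LinearMap.surjective hψ)
  rw [h2, finrank_top, finrank_self, finrank_fin_fun] at h1
  omega

theorem code_bridge {p : ℕ} [CharP F p] (e : (Fin 3 → F) →ₗ[F] (Fin (n + 1) → F))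
    (c : ProjPoint F (n + 1) → ZMod p) (hc : c ∈ hypCode F p (n + 1)) :
    ∃ f ∈ vcode F, ∀ v (P : ProjPoint F (n + 1)), e v ≠ 0 → e v ∈ P.1 → f v = ZMod.castHom (dvd_refl p) F (c P) := by
  classical
  induction hc using Submodule.span_induction with
  | mem c h =>
    obtain ⟨H, hH, rfl⟩ := h
    obtain ⟨ψ, hψ⟩ := exists_dual H (by simpa using hH)
    refine ⟨_, vcode_gen (fun i => ψ (e (Pi.single i 1))), fun v P hv hP => ?_⟩
    have h1 : v ⬝ᵥ (fun i => ψ (e (Pi.single i 1))) = ψ (e v) := by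
      conv_rhs => rw [pi_eq_sum_univ' v]
      simp [dotProduct, map_sum, Pi.single_apply]
    have h2 : P ∈ pointsIn F (n + 1) H ↔ ψ (e v) = 0 := by
      show P.1 ≤ H ↔ _
      rw [eq_span_of_mem P hv hP, Submodule.span_singleton_le_iff_mem, ← hψ, LinearMap.mem_ker]
    rw [h1]
    by_cases h3 : ψ (e v) = 0
    · simp [charVec, h2.2 h3, h3]
    · have : P ∉ pointsIn F (n + 1) H := fun h => h3 (h2.1 h)
      simp [charVec, this, h3]
  | zero => exact ⟨0, Submodule.zero_mem _, fun v P _ _ => by simp⟩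
  | add c d _ _ hc hd =>
    obtain ⟨f, hf, hf2⟩ := hc
    obtain ⟨g, hg, hg2⟩ := hd
    refine ⟨f + g, Submodule.add_mem _ hf hg, fun v P h1 h2 => ?_⟩
    rw [Pi.add_apply, Pi.add_apply, map_add, hf2 v P h1 h2, hg2 v P h1 h2]
  | smul a c _ hc =>
    obtain ⟨f, hf, hf2⟩ := hc
    refine ⟨(ZMod.castHom (dvd_refl p) F a) • f, Submodule.smul_mem _ _ hf, fun v P h1 h2 => ?_⟩
    rw [Pi.smul_apply, Pi.smul_apply, smul_eq_mul, smul_eq_mul, map_mul, hf2 v P h1 h2]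

open Classical in
/-- the pull-back of `V` along a parametrized plane -/
noncomputable def Bset (V : Set (ProjPoint F n)) (e : (Fin 3 → F) →ₗ[F] (Fin n → F)) :
    Finset (ℙ F (Fin 3 → F)) := univ.filter (fun x => VS V (e x.rep))

theorem mem_Bset (V : Set (ProjPoint F n)) (e : (Fin 3 → F) →ₗ[F] (Fin n → F)) (v : Fin 3 → F) (hv : v ≠ 0) :
    Projectivization.mk F v hv ∈ Bset V e ↔ VS V (e v) := by
  obtain ⟨a, ha⟩ := Projectivization.exists_smul_eq_mk_rep F v hv
  simp only [Bset, mem_filter, mem_univ, true_and, ← ha]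
  have : e (a • v) = (a : F) • e v := by rw [← map_smul]; rfl
  rw [this, VS_smul V a.ne_zero]

theorem mem_Bset_rep (V : Set (ProjPoint F n)) (e : (Fin 3 → F) →ₗ[F] (Fin n → F)) (x : ℙ F (Fin 3 → F)) :
    x ∈ Bset V e ↔ VS V (e x.rep) := by
  simp [Bset]

theorem Bset_code {p : ℕ} [CharP F p] (V : Set (ProjPoint F (n + 1)))
    (hV : charVec F p (n + 1) V ∈ hypCode F p (n + 1)) (e : (Fin 3 → F) →ₗ[F] (Fin (n + 1) → F))
    (he : LinearMap.ker e = ⊥) :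
    ∃ f ∈ vcode F, ∀ v (hv : v ≠ 0), f v = if Projectivization.mk F v hv ∈ Bset V e then 1 else 0 := by
  obtain ⟨f, hf, h⟩ := code_bridge e _ hV
  refine ⟨f, hf, fun v hv => ?_⟩
  have hev : e v ≠ 0 := fun h0 => hv (by
    have : v ∈ LinearMap.ker e := h0
    rwa [he, Submodule.mem_bot] at this)
  rw [h v (pt (e v) hev) hev (Submodule.mem_span_singleton_self _)]
  have h1 := mem_Bset V e v hv
  rw [VS_pt V hev] at h1
  by_cases h2 : pt (e v) hev ∈ V
  · rw [if_pos (h1.2 h2)]; simp [charVec, h2]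
  · rw [if_neg (fun h3 => h2 (h1.1 h3))]; simp [charVec, h2]

theorem ind_Bset {p : ℕ} [CharP F p] (V : Set (ProjPoint F (n + 1)))
    (hV : charVec F p (n + 1) V ∈ hypCode F p (n + 1)) (e : (Fin 3 → F) →ₗ[F] (Fin (n + 1) → F))
    (he : LinearMap.ker e = ⊥) : ind F (Bset V e) ∈ pcode F := by
  obtain ⟨f, hf, h⟩ := Bset_code V hV e he
  refine ⟨f, hf, ?_⟩
  funext x
  have := h x.rep x.rep_nonzero
  rw [x.mk_rep] at this
  rw [LinearMap.funLeft_apply, this, ind]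

open Classical in
theorem card_Bset (V : Set (ProjPoint F n)) (e : (Fin 3 → F) →ₗ[F] (Fin n → F))
    (he : LinearMap.ker e = ⊥) (S : Submodule F (Fin 3 → F)) :
    ((Bset V e).filter (fun x => x.rep ∈ S)).card = secant F n V (S.map e) := by
  have hinj : Function.Injective e := LinearMap.ker_eq_bot.1 he
  have hne : ∀ v, v ≠ 0 → e v ≠ 0 := fun v hv h0 => hv (hinj (by rw [h0, map_zero]))
  let E : ℙ F (Fin 3 → F) → ProjPoint F n := fun x => pt (e x.rep) (hne _ x.rep_nonzero)
  have hE : Function.Injective E := by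
    intro x y h
    have h1 : Submodule.span F {e x.rep} = Submodule.span F {e y.rep} := congrArg Subtype.val h
    have h2 : e x.rep ∈ Submodule.span F {e y.rep} := by
      rw [← h1]; exact Submodule.mem_span_singleton_self _
    obtain ⟨a, ha⟩ := Submodule.mem_span_singleton.1 h2
    rw [← map_smul] at ha
    have h3 := hinj ha
    rw [← x.mk_rep, ← y.mk_rep, Projectivization.mk_eq_mk_iff']
    exact ⟨a, h3⟩
  rw [secant, ← Finset.card_image_of_injective _ hE, ← Set.ncard_coe_finset]
  congr 1
  ext P
  simp only [coe_image, coe_filter, Set.mem_image, Set.mem_setOf_eq, mem_Bset_rep]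
  constructor
  · rintro ⟨x, ⟨h1, h2⟩, rfl⟩
    refine ⟨(VS_pt V _).1 h1, ?_⟩
    show Submodule.span F {e x.rep} ≤ _
    rw [Submodule.span_singleton_le_iff_mem]
    exact Submodule.mem_map_of_mem h2
  · rintro ⟨h1, h2⟩
    obtain ⟨w, hw, hP⟩ := exists_gen P
    have hwP : w ∈ P.1 := by rw [hP]; exact Submodule.mem_span_singleton_self _
    obtain ⟨v, hv, rfl⟩ := h2 hwP
    have hv0 : v ≠ 0 := by rintro rfl; simp at hw
    refine ⟨Projectivization.mk F v hv0, ?_⟩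
    obtain ⟨a, ha⟩ := Projectivization.exists_smul_eq_mk_rep F v hv0
    have ha' : (Projectivization.mk F v hv0).rep = (a : F) • v := ha.symm
    have hmem : e (Projectivization.mk F v hv0).rep ∈ P.1 := by
      rw [ha', map_smul]; exact P.1.smul_mem _ hwP
    refine ⟨⟨⟨hne _ (Projectivization.rep_nonzero _), P, h1, hmem⟩, ?_⟩, pt_eq P _ hmem⟩
    rw [ha']; exact S.smul_mem _ hv

/-- the vectors of the line with coordinates `φ` -/
def perp (φ : Fin 3 → F) : Submodule F (Fin 3 → F) where
  carrier := {v | v ⬝ᵥ φ = 0}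
  add_mem' := by
    intro a b ha hb
    simp only [Set.mem_setOf_eq] at *
    rw [add_dotProduct, ha, hb, add_zero]
  zero_mem' := by simp
  smul_mem' := by
    intro c x hx
    simp only [Set.mem_setOf_eq] at *
    rw [smul_dotProduct, hx, smul_zero]

theorem mem_perp {φ v : Fin 3 → F} : v ∈ perp φ ↔ v ⬝ᵥ φ = 0 := Iff.rfl

theorem finrank_perp {φ : Fin 3 → F} (hφ : φ ≠ 0) : finrank F (perp φ) = 2 := by
  have h := card_pointsIn (perp φ)
  -- via rank-nullity
  let ψ : (Fin 3 → F) →ₗ[F] F :=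
    { toFun := fun v => v ⬝ᵥ φ
      map_add' := fun a b => add_dotProduct _ _ _
      map_smul' := fun a b => smul_dotProduct _ _ _ }
  have h1 := LinearMap.finrank_range_add_finrank_ker ψ
  have hk : LinearMap.ker ψ = perp φ := by ext v; rfl
  have hψ : ψ ≠ 0 := by
    intro h0
    apply hφ
    ext i
    have := congrArg (fun g : (Fin 3 → F) →ₗ[F] F => g (Pi.single i 1)) h0
    simpa [ψ] using this
  have h2 : LinearMap.range ψ = ⊤ := LinearMap.range_eq_top.2 (LinearMap.surjective hψ)
  rw [h2, hk, finrank_top, finrank_self, finrank_fin_fun] at h1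
  omega

theorem card_Bset_line (V : Set (ProjPoint F n)) (e : (Fin 3 → F) →ₗ[F] (Fin n → F))
    (he : LinearMap.ker e = ⊥) (l : ℙ F (Fin 3 → F)) :
    (Bset V e ∩ lnp F l).card = secant F n V ((perp l.rep).map e) := by
  classical
  rw [← card_Bset V e he]
  congr 1
  ext x
  simp only [mem_inter, mem_filter, mem_lnp_rep, mem_perp]

theorem card_Bset_all (V : Set (ProjPoint F n)) (e : (Fin 3 → F) →ₗ[F] (Fin n → F))
    (he : LinearMap.ker e = ⊥) :
    (Bset V e).card = secant F n V (LinearMap.range e) := by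
  classical
  rw [← Submodule.map_top, ← card_Bset V e he]
  simp

theorem finrank_map_perp (e : (Fin 3 → F) →ₗ[F] (Fin n → F)) (he : LinearMap.ker e = ⊥)
    {φ : Fin 3 → F} (hφ : φ ≠ 0) : finrank F ((perp φ).map e) = 2 := by
  rw [← finrank_perp hφ]
  exact (LinearEquiv.finrank_eq (Submodule.equivMapOfInjective e (LinearMap.ker_eq_bot.1 he) (perp φ))).symm

end
end QH

namespace QH
open Finset Module
open scoped LinearAlgebra.Projectivization

section
variable {F : Type} [Field F] [Fintype F] [DecidableEq F] {n : ℕ}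

theorem exists_param (ρ : Submodule F (Fin n → F)) (hρ : finrank F ρ = 3) :
    ∃ e : (Fin 3 → F) →ₗ[F] (Fin n → F), LinearMap.ker e = ⊥ ∧ LinearMap.range e = ρ := by
  let E : (Fin 3 → F) ≃ₗ[F] ρ := LinearEquiv.ofFinrankEq _ _ (by rw [hρ, finrank_fin_fun])
  refine ⟨ρ.subtype ∘ₗ E.toLinearMap, ?_, ?_⟩
  · rw [LinearMap.ker_eq_bot]
    exact (Submodule.injective_subtype ρ).comp E.injective
  · rw [LinearMap.range_comp, LinearEquiv.range, Submodule.map_top, Submodule.range_subtype]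

theorem exists_line (e : (Fin 3 → F) →ₗ[F] (Fin n → F)) (he : LinearMap.ker e = ⊥)
    (ℓ : Submodule F (Fin n → F)) (hl : finrank F ℓ = 2) (hle : ℓ ≤ LinearMap.range e) :
    ∃ l : ℙ F (Fin 3 → F), (perp l.rep).map e = ℓ := by
  have hm : (ℓ.comap e).map e = ℓ := by
    rw [Submodule.map_comap_eq, inf_eq_right.2 hle]
  have hf : finrank F (ℓ.comap e) = 2 := by
    rw [LinearEquiv.finrank_eq (Submodule.equivMapOfInjective e (LinearMap.ker_eq_bot.1 he) _), hm, hl]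
  obtain ⟨ψ, hψ⟩ := exists_dual (n := 2) (ℓ.comap e) hf
  have h1 : ∀ v : Fin 3 → F, v ⬝ᵥ (fun i => ψ (Pi.single i 1)) = ψ v := by
    intro v
    conv_rhs => rw [pi_eq_sum_univ' v]
    simp [dotProduct, map_sum, Pi.single_apply]
  have hφ : (fun i => ψ (Pi.single i 1)) ≠ 0 := by
    intro h0
    have : LinearMap.ker ψ = ⊤ := by
      rw [eq_top_iff]
      intro v _
      rw [LinearMap.mem_ker, ← h1, h0, dotProduct_zero]
    rw [← hψ, this, finrank_top, finrank_fin_fun] at hf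
    omega
  refine ⟨Projectivization.mk F _ hφ, ?_⟩
  rw [← hm]
  congr 1
  rw [← hψ]
  obtain ⟨a, ha⟩ := Projectivization.exists_smul_eq_mk_rep F _ hφ
  ext v
  rw [mem_perp, ← ha, LinearMap.mem_ker, ← h1]
  have h2 : v ⬝ᵥ (a • fun i => ψ (Pi.single i 1)) = (a : F) * (v ⬝ᵥ fun i => ψ (Pi.single i 1)) :=
    dotProduct_smul (a : F) v _
  rw [h2, mul_eq_zero]
  simp

theorem plane_bound {p : ℕ} [CharP F p] (V : Set (ProjPoint F (n + 1)))
    (hV : charVec F p (n + 1) V ∈ hypCode F p (n + 1))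
    (hpos : ∀ ℓ : Submodule F (Fin (n + 1) → F), finrank F ℓ = 2 → 1 ≤ secant F (n + 1) V ℓ)
    (ℓ ρ : Submodule F (Fin (n + 1) → F)) (hl : finrank F ℓ = 2) (hρ : finrank F ρ = 3) (hle : ℓ ≤ ρ)
    (hs : secant F (n + 1) V ℓ ≤ Fintype.card F) :
    secant F (n + 1) V ℓ * (Fintype.card F + 1) + 1 ≤ secant F (n + 1) V ρ +
      secant F (n + 1) V ℓ * secant F (n + 1) V ℓ := by
  obtain ⟨e, he, hr⟩ := exists_param ρ hρ
  obtain ⟨l, hl'⟩ := exists_line e he ℓ hl (hr ▸ hle)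
  have hIB := IB_pcode _ (ind_Bset V hV e he)
  rw [supp_ind] at hIB
  have hc := card_Bset_line V e he l
  rw [hl'] at hc
  obtain ⟨T, hT1, hT2⟩ := pplane.exists_notMem (Bset V e) l (by rw [hc]; exact hs)
  obtain ⟨m, hm1, hm2⟩ := pplane.exists_other (Fintype.card_pos (α := F)) T l
  have h := hIB T l m hT2 hT1 hm1 hm2
  have hcm := card_Bset_line V e he m
  have hm3 := hpos _ (finrank_map_perp e he m.rep_nonzero)
  rw [hc, hcm, card_Bset_all V e he, hr] at h
  omega

theorem finrank_sup_span (ℓ : Submodule F (Fin n → F)) (v : Fin n → F) (hv : v ∉ ℓ) :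
    finrank F (ℓ ⊔ Submodule.span F {v} : Submodule F (Fin n → F)) = finrank F ℓ + 1 := by
  have h := Submodule.finrank_sup_add_finrank_inf_eq ℓ (Submodule.span F {v})
  have hv0 : v ≠ 0 := by rintro rfl; exact hv ℓ.zero_mem
  have h2 : ℓ ⊓ Submodule.span F {v} = ⊥ := by
    rw [eq_bot_iff]
    rintro x ⟨hx1, hx2⟩
    obtain ⟨a, rfl⟩ := Submodule.mem_span_singleton.1 hx2
    by_cases ha : a = 0
    · simp [ha]
    · exact absurd ((Submodule.smul_mem_iff _ ha).1 hx1) hv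
  rw [h2, finrank_bot, finrank_span_singleton hv0] at h
  omega

theorem exch (ℓ : Submodule F (Fin n → F)) (u v : Fin n → F) (hu : u ∉ ℓ)
    (h : u ∈ ℓ ⊔ Submodule.span F {v}) : v ∈ ℓ ⊔ Submodule.span F {u} := by
  obtain ⟨y, hy, z, hz, rfl⟩ := Submodule.mem_sup.1 h
  obtain ⟨a, rfl⟩ := Submodule.mem_span_singleton.1 hz
  have ha : a ≠ 0 := by
    rintro rfl
    simp at hu
    exact hu hy
  refine Submodule.mem_sup.2 ⟨-(a⁻¹ • y), ℓ.neg_mem (ℓ.smul_mem _ hy), a⁻¹ • (y + a • v),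
    Submodule.smul_mem _ _ (Submodule.mem_span_singleton_self _), ?_⟩
  rw [smul_add, smul_smul, inv_mul_cancel₀ ha, one_smul]
  abel

open Classical in
theorem card_split (V : Set (ProjPoint F n)) (ℓ ρ : Submodule F (Fin n → F)) (hle : ℓ ≤ ρ) :
    (univ.filter (fun w : Fin n → F => w ∉ ℓ ∧ VS V w ∧ w ∈ ρ)).card +
      (Fintype.card F - 1) * secant F n V ℓ = (Fintype.card F - 1) * secant F n V ρ := by
  rw [← card_vec_in, ← card_vec_in, ← Finset.card_union_of_disjoint]
  · congr 1
    ext w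
    simp only [mem_union, mem_filter, mem_univ, true_and]
    have := @hle w
    tauto
  · rw [Finset.disjoint_left]
    intro w
    simp only [mem_filter, mem_univ, true_and]
    tauto

open Classical in
theorem card_split' (ℓ ρ : Submodule F (Fin n → F)) (hle : ℓ ≤ ρ) :
    (univ.filter (fun w : Fin n → F => w ∉ ℓ ∧ w ∈ ρ)).card +
      Fintype.card F ^ finrank F ℓ = Fintype.card F ^ finrank F ρ := by
  rw [← card_mem_sub, ← card_mem_sub, ← Finset.card_union_of_disjoint]
  · congr 1
    ext w
    simp only [mem_union, mem_filter, mem_univ, true_and]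
    have := @hle w
    tauto
  · rw [Finset.disjoint_left]
    intro w
    simp only [mem_filter, mem_univ, true_and]
    tauto

theorem double_count (V : Set (ProjPoint F n)) (ℓ : Submodule F (Fin n → F)) (hl : finrank F ℓ = 2)
    (D : ℕ) (hD : ∀ ρ : Submodule F (Fin n → F), finrank F ρ = 3 → ℓ ≤ ρ →
      D + secant F n V ℓ ≤ secant F n V ρ) :
    ((Fintype.card F : ℤ) ^ n - (Fintype.card F : ℤ) ^ 2) * D ≤
      ((V.ncard : ℤ) - secant F n V ℓ) * ((Fintype.card F : ℤ) ^ 3 - (Fintype.card F : ℤ) ^ 2) := by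
  classical
  let A : Finset (Fin n → F) := univ.filter (fun v => v ∉ ℓ)
  let B : Finset (Fin n → F) := univ.filter (fun u => u ∉ ℓ ∧ VS V u)
  have hQ2 : 1 < Fintype.card F := Fintype.one_lt_card
  have hA : A.card + Fintype.card F ^ 2 = Fintype.card F ^ n := by
    have := card_split' ℓ ⊤ le_top
    rw [finrank_top, finrank_fin_fun, hl] at this
    simpa [A] using this
  have hB : B.card + (Fintype.card F - 1) * secant F n V ℓ = (Fintype.card F - 1) * V.ncard := by
    have := card_split V ℓ ⊤ le_top
    have h2 : secant F n V ⊤ = V.ncard := by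
      rw [secant]; congr 1; ext P; simp [pointsIn]
    rw [h2] at this
    simpa [B] using this
  have hd := Finset.sum_card_bipartiteAbove_eq_sum_card_bipartiteBelow
    (s := A) (t := B) (fun v u => u ∈ ℓ ⊔ Submodule.span F {v})
  have h1 : ∀ v ∈ A, (Fintype.card F - 1) * D ≤
      (B.bipartiteAbove (fun v u => u ∈ ℓ ⊔ Submodule.span F {v}) v).card := by
    intro v hv
    have hv' : v ∉ ℓ := by simpa [A] using hv
    have h2 := card_split V ℓ (ℓ ⊔ Submodule.span F {v}) le_sup_left
    have h3 := hD (ℓ ⊔ Submodule.span F {v}) (by rw [finrank_sup_span _ _ hv', hl]) le_sup_left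
    have h4 : (B.bipartiteAbove (fun v u => u ∈ ℓ ⊔ Submodule.span F {v}) v) =
        univ.filter (fun w : Fin n → F => w ∉ ℓ ∧ VS V w ∧ w ∈ ℓ ⊔ Submodule.span F {v}) := by
      ext w; simp [Finset.bipartiteAbove, B, and_assoc]
    rw [h4]
    have h5 := Nat.mul_le_mul_left (Fintype.card F - 1) h3
    rw [mul_add, ← h2] at h5
    omega
  have h2 : ∀ u ∈ B, (A.bipartiteBelow (fun v u => u ∈ ℓ ⊔ Submodule.span F {v}) u).card =
      Fintype.card F ^ 3 - Fintype.card F ^ 2 := by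
    intro u hu
    have hu' : u ∉ ℓ := by
      simp only [B, mem_filter] at hu; exact hu.2.1
    have h2 := card_split' ℓ (ℓ ⊔ Submodule.span F {u}) le_sup_left
    rw [finrank_sup_span _ _ hu', hl, show 2 + 1 = 3 from rfl] at h2
    have h4 : (A.bipartiteBelow (fun v u => u ∈ ℓ ⊔ Submodule.span F {v}) u) =
        univ.filter (fun w : Fin n → F => w ∉ ℓ ∧ w ∈ ℓ ⊔ Submodule.span F {u}) := by
      ext w
      simp only [Finset.bipartiteBelow, A, mem_filter, mem_univ, true_and]
      exact and_congr_right fun hw => ⟨exch ℓ u w hu', exch ℓ w u hw⟩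
    rw [h4]
    omega
  have h3 := Finset.card_nsmul_le_sum A _ _ h1
  rw [hd, Finset.sum_congr rfl h2, Finset.sum_const, smul_eq_mul, smul_eq_mul] at h3
  have hle : Fintype.card F ^ 2 ≤ Fintype.card F ^ 3 := Nat.pow_le_pow_right (by omega) (by norm_num)
  zify [hle, hQ2.le] at h3 hA hB
  have hQ' : (0 : ℤ) < (Fintype.card F : ℤ) - 1 := by
    have : (1 : ℤ) < Fintype.card F := by exact_mod_cast hQ2
    linarith
  refine le_of_mul_le_mul_left ?_ hQ'
  have e1 : (A.card : ℤ) = (Fintype.card F : ℤ) ^ n - (Fintype.card F : ℤ) ^ 2 := by linarith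
  have e2 : (B.card : ℤ) = ((Fintype.card F : ℤ) - 1) * ((V.ncard : ℤ) - secant F n V ℓ) := by linarith
  rw [e1, e2] at h3
  linarith

end
end QH

namespace QH
open Finset Module
open scoped LinearAlgebra.Projectivization

section
variable {F : Type} [Field F] [Fintype F] [DecidableEq F]

theorem size_zmod {p q r N : ℕ} (hr : 1 ≤ r) (hq : (q : ZMod p) = 0)
    (h : (N : ℤ) * ((q : ℤ) ^ 2 - 1) = ((q : ℤ) ^ (r + 1) + (-1) ^ r) * ((q : ℤ) ^ r - (-1) ^ r)) :
    (N : ZMod p) = 1 := by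
  have h2 := congrArg (Int.cast : ℤ → ZMod p) h
  push_cast at h2
  rw [hq, zero_pow (show r + 1 ≠ 0 by omega), zero_pow (show r ≠ 0 by omega), zero_pow (show 2 ≠ 0 by norm_num)] at h2
  have h3 : ((-1 : ZMod p) ^ r) * (-1) ^ r = 1 := by
    rw [← mul_pow]; simp
  linear_combination -h2 + h3

theorem size_arith {q r N s : ℤ} {a : ℤ} (hq : 4 < q) (ha : q ^ 2 ≤ a) (hs : 0 < s) (ε : ℤ)
    (hε : ε = 1 ∨ ε = -1)
    (hN : N * (q ^ 2 - 1) = (a * q ^ 2 + ε) * (a * q - ε))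
    (h : (q ^ 3 + 1) * (a ^ 2 - 1) ≤ (N - s) * (q ^ 2 - 1)) : False := by
  have h1 : 0 < s * (q ^ 2 - 1) := mul_pos hs (by nlinarith)
  have h2 : 0 ≤ (a - q ^ 2) * (a + q) := mul_nonneg (by linarith) (by nlinarith)
  have h3 : 0 ≤ a * q * (q - 1) := by
    have : 0 ≤ a := by nlinarith
    exact mul_nonneg (mul_nonneg this (by linarith)) (by linarith)
  rcases hε with rfl | rfl <;> nlinarith

theorem lemmaA {p q r : ℕ} [CharP F p] (hq4 : 4 < q) (hr : 3 ≤ r) (hF : Fintype.card F = q ^ 2)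
    (hqp : (q : ZMod p) = 0) (hp : p.Prime)
    (V : Set (ProjPoint F (r + 1))) (hV : IsQuasiHermitian F q r V)
    (hcode : charVec F p (r + 1) V ∈ hypCode F p (r + 1))
    (ℓ : Submodule F (Fin (r + 1) → F)) (hl : finrank F ℓ = 2) :
    secant F (r + 1) V ℓ ≤ q + 1 ∨ q ^ 2 ≤ secant F (r + 1) V ℓ + q + 1 := by
  haveI := Fact.mk hp
  by_contra hcon
  push Not at hcon
  obtain ⟨hc1, hc2⟩ := hcon
  have hQ : ((Fintype.card F : ℕ) : ZMod p) = 0 := by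
    rw [hF]; push_cast; rw [hqp]; ring
  have hN1 : ((V.ncard : ℕ) : ZMod p) = 1 := size_zmod (by omega) hqp hV.1
  have hpos : ∀ ℓ : Submodule F (Fin (r + 1) → F), finrank F ℓ = 2 → 1 ≤ secant F (r + 1) V ℓ := by
    intro m hm
    by_contra h0
    have h1 := secant_zmod hQ V hcode (by omega) m (by omega)
    rw [hN1, show secant F (r + 1) V m = 0 by omega] at h1
    simp at h1
  set s := secant F (r + 1) V ℓ with hs
  have hD := double_count V ℓ hl (q ^ 3 + 1) (by
    intro ρ hρ hle
    have h := plane_bound V hcode hpos ℓ ρ hl hρ hle (by rw [hF]; omega)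
    rw [← hs, hF] at h
    rw [← hs]
    zify at *
    nlinarith [mul_nonneg (show (0 : ℤ) ≤ (s : ℤ) - q - 2 by linarith) (show (0 : ℤ) ≤ (q : ℤ) ^ 2 - q - 2 - s by linarith),
      mul_pos (show (0:ℤ) < (q:ℤ) - 4 by linarith) (show (0:ℤ) < (q:ℤ) by linarith)])
  rw [← hs, hF] at hD
  push_cast at hD
  have hq0 : (4 : ℤ) < q := by exact_mod_cast hq4
  obtain ⟨k, rfl⟩ : ∃ k, r = k + 1 := ⟨r - 1, by omega⟩
  have hs0 := hpos ℓ hl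
  rw [← hs] at hs0
  have ha : (q : ℤ) ^ 2 ≤ (q : ℤ) ^ k := pow_le_pow_right₀ (by linarith) (by omega)
  refine size_arith (r := 0) (N := V.ncard) (s := s) hq0 ha (by exact_mod_cast hs0) ((-1) ^ (k + 1)) (neg_one_pow_eq_or ℤ _) ?_ ?_
  · rw [hV.1]; ring
  · refine le_of_mul_le_mul_left ?_ (show (0 : ℤ) < (q : ℤ) ^ 4 by positivity)
    have e : ((q : ℤ) ^ 2) ^ (k + 1 + 1) = (q : ℤ) ^ 4 * ((q : ℤ) ^ k) ^ 2 := by ring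
    rw [e] at hD
    linarith
end
end QH

namespace QH
open Finset Module
open scoped LinearAlgebra.Projectivization

section
variable {F : Type} [Field F] [Fintype F] [DecidableEq F] {n : ℕ}

theorem final_lines {p q : ℕ} [Fact p.Prime] [CharP F p] (V : Set (ProjPoint F n))
    (π : Submodule F (Fin n → F)) (e : (Fin 3 → F) →ₗ[F] (Fin n → F))
    (he : LinearMap.ker e = ⊥) (hr : LinearMap.range e = π)
    (S : Finset (ℙ F (Fin 3 → F))) (hS : S.card ≤ q + 1)
    (hsum : ind F (Bset V e) = ∑ l ∈ S, ind F (lnp F l)) :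
    ∃ L : Finset (Submodule F (Fin n → F)), L.card ≤ q + 1 ∧
      (∀ ℓ ∈ L, ℓ ≤ π ∧ finrank F ℓ = 2) ∧
      charVec F p n (V ∩ pointsIn F n π) = ∑ ℓ ∈ L, charVec F p n (pointsIn F n ℓ) := by
  classical
  have hinj : Function.Injective e := LinearMap.ker_eq_bot.1 he
  have key : ∀ (v : Fin 3 → F) (hv : v ≠ 0) (l : ℙ F (Fin 3 → F)),
      e v ∈ (perp l.rep).map e ↔ Projectivization.mk F v hv ∈ lnp F l := by
    intro v hv l
    rw [mem_lnp_rep]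
    obtain ⟨a, ha⟩ := Projectivization.exists_smul_eq_mk_rep F v hv
    have ha2 : (Projectivization.mk F v hv).rep = (a : F) • v := ha.symm
    rw [ha2, smul_dotProduct, smul_eq_mul, mul_eq_zero]
    constructor
    · rintro ⟨w, hw, h⟩
      rw [← hinj h]; exact Or.inr hw
    · rintro (h | h)
      · exact absurd h a.ne_zero
      · exact Submodule.mem_map_of_mem h
  have hLinj : Function.Injective (fun l : ℙ F (Fin 3 → F) => (perp l.rep).map e) := by
    intro l m hlm
    have hsub : lnp F l = lnp F m := by
      ext x
      rw [← x.mk_rep, ← key, ← key]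
      simp only at hlm
      rw [hlm]
    by_contra hne
    have h2 : 1 < (lnp F l).card := by
      have := (pplane (F := F)).cardl l
      have := Fintype.card_pos (α := F)
      omega
    obtain ⟨x, hx, y, hy, hxy⟩ := Finset.one_lt_card.1 h2
    exact hne ((pplane (F := F)).uniq x y l m hxy hx hy (hsub ▸ hx) (hsub ▸ hy))
  refine ⟨S.image (fun l => (perp l.rep).map e), Finset.card_image_le.trans hS, ?_, ?_⟩
  · intro ℓ hℓ
    obtain ⟨l, _, rfl⟩ := Finset.mem_image.1 hℓ
    refine ⟨?_, finrank_map_perp e he l.rep_nonzero⟩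
    rw [← hr]; exact LinearMap.map_le_range
  · rw [Finset.sum_image (fun a _ b _ h => hLinj h)]
    funext P
    rw [Finset.sum_apply]
    by_cases hP : P.1 ≤ π
    · obtain ⟨w, hw, hPw⟩ := exists_gen P
      have hwP : w ∈ P.1 := by rw [hPw]; exact Submodule.mem_span_singleton_self _
      have hwr : w ∈ LinearMap.range e := by rw [hr]; exact hP hwP
      obtain ⟨v, rfl⟩ := hwr
      have hv : v ≠ 0 := by rintro rfl; simp at hw
      have h1 := congrFun hsum (Projectivization.mk F v hv)
      rw [Finset.sum_apply] at h1
      apply (ZMod.castHom (dvd_refl p) F).injective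
      rw [map_sum]
      have e1 : ZMod.castHom (dvd_refl p) F (charVec F p n (V ∩ pointsIn F n π) P) =
          ind F (Bset V e) (Projectivization.mk F v hv) := by
        have h2 : P ∈ V ∩ pointsIn F n π ↔ Projectivization.mk F v hv ∈ Bset V e := by
          rw [mem_Bset, VS_pt V hw, pt_eq P hw hwP]
          exact ⟨fun h => h.1, fun h => ⟨h, hP⟩⟩
        by_cases h3 : P ∈ V ∩ pointsIn F n π
        · rw [charVec, Set.indicator_of_mem h3, ind, if_pos (h2.1 h3)]; simp
        · rw [charVec, Set.indicator_of_notMem h3, ind, if_neg (fun h => h3 (h2.2 h))]; simp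
      have e2 : ∀ l, ZMod.castHom (dvd_refl p) F (charVec F p n (pointsIn F n ((perp l.rep).map e)) P) =
          ind F (lnp F l) (Projectivization.mk F v hv) := by
        intro l
        have h2 : P ∈ pointsIn F n ((perp l.rep).map e) ↔ Projectivization.mk F v hv ∈ lnp F l := by
          rw [← key v hv l]
          show P.1 ≤ _ ↔ _
          rw [hPw, Submodule.span_singleton_le_iff_mem]
        by_cases h3 : P ∈ pointsIn F n ((perp l.rep).map e)
        · rw [charVec, Set.indicator_of_mem h3, ind, if_pos (h2.1 h3)]; simp
        · rw [charVec, Set.indicator_of_notMem h3, ind, if_neg (fun h => h3 (h2.2 h))]; simp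
      rw [e1, h1]
      exact Finset.sum_congr rfl (fun l _ => (e2 l).symm)
    · rw [charVec, Set.indicator_of_notMem (fun h => hP h.2)]
      symm
      apply Finset.sum_eq_zero
      intro l _
      rw [charVec, Set.indicator_of_notMem]
      intro h
      refine hP (le_trans (show P.1 ≤ _ from h) ?_)
      rw [← hr]; exact LinearMap.map_le_range

theorem final_unital {p q : ℕ} [CharP F p] (hq4 : 4 < q) (hF : Fintype.card F = q ^ 2)
    (frob : ∀ a b : F, (a + b) ^ q = a ^ q + b ^ q) (hq0 : (q : F) = 0)
    (V : Set (ProjPoint F (n + 1))) (hV : charVec F p (n + 1) V ∈ hypCode F p (n + 1))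
    (π : Submodule F (Fin (n + 1) → F)) (hπ : finrank F π = 3) (e : (Fin 3 → F) →ₗ[F] (Fin (n + 1) → F))
    (he : LinearMap.ker e = ⊥) (hr : LinearMap.range e = π)
    (hc : (Bset V e).card = q ^ 3 + 1)
    (hl : ∀ l, (Bset V e ∩ lnp F l).card = 1 ∨ (Bset V e ∩ lnp F l).card = q + 1) :
    IsClassicalUnital F q (n + 1) π (V ∩ pointsIn F (n + 1) π) := by
  obtain ⟨f, hf, hfB⟩ := Bset_code V hV e he
  have hU := unital_of_plane hq4 hF f hf (Bset V e) hfB hc hl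
  obtain ⟨b0, t, b2, hI, A, hA1, hA2, hA3⟩ := hU.hermitian hq4 hF frob hq0
  let g : (Fin 3 → F) →ₗ[F] (Fin 3 → F) :=
    { toFun := fun y => y 0 • b0 + y 1 • t + y 2 • b2
      map_add' := by
        intro x y; simp only [Pi.add_apply, add_smul]; abel
      map_smul' := by
        intro a x
        simp only [Pi.smul_apply, smul_eq_mul, mul_smul, smul_add, RingHom.id_apply] }
  have hg : ∀ y, g y = y 0 • b0 + y 1 • t + y 2 • b2 := fun y => rfl
  have hgk : LinearMap.ker g = ⊥ := by
    rw [LinearMap.ker_eq_bot']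
    intro y hy
    obtain ⟨h0, h1, h2⟩ := hI _ _ _ hy
    ext i
    fin_cases i
    · exact h0
    · exact h1
    · exact h2
  have hginj : Function.Injective g := LinearMap.ker_eq_bot.1 hgk
  have hgs : Function.Surjective g := LinearMap.injective_iff_surjective.1 hginj
  have hinj : Function.Injective e := LinearMap.ker_eq_bot.1 he
  refine ⟨e ∘ₗ g, ?_, ?_, A, hA1, hA2, ?_⟩
  · rw [LinearMap.ker_eq_bot]; exact hinj.comp hginj
  · rw [LinearMap.range_comp, LinearMap.range_eq_top.2 hgs, Submodule.map_top, hr]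
  · ext P
    constructor
    · rintro ⟨hPV, hPπ⟩
      obtain ⟨w, hw, hPw⟩ := exists_gen P
      have hwP : w ∈ P.1 := by rw [hPw]; exact Submodule.mem_span_singleton_self _
      have hwr : w ∈ LinearMap.range e := by rw [hr]; exact hPπ hwP
      obtain ⟨v, rfl⟩ := hwr
      obtain ⟨y, rfl⟩ := hgs v
      have hv : g y ≠ 0 := by intro h; rw [h] at hw; simp at hw
      have hy : y ≠ 0 := by rintro rfl; simp at hv
      refine ⟨y, hy, hPw, (hA3 y hy).1 ⟨hv, ?_⟩⟩
      show Projectivization.mk F (g y) hv ∈ _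
      rw [mem_Bset, VS_pt V hw, pt_eq P hw hwP]
      exact hPV
    · rintro ⟨y, hy, hPy, hsum⟩
      obtain ⟨hv, hm⟩ := (hA3 y hy).2 hsum
      have hm2 : Projectivization.mk F (g y) hv ∈ Bset V e := hm
      have hw : e (g y) ≠ 0 := fun h0 => hv (hinj (by rw [map_zero]; exact h0))
      have hwP : e (g y) ∈ P.1 := by rw [hPy]; exact Submodule.mem_span_singleton_self _
      rw [mem_Bset, VS_pt V hw, pt_eq P hw hwP] at hm2
      refine ⟨hm2, ?_⟩
      show P.1 ≤ π
      rw [hPy, Submodule.span_singleton_le_iff_mem, ← hr]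
      exact LinearMap.mem_range_self _ _

end
end QH

open scoped LinearAlgebra.Projectivization

/-- if a plane `π` meets `V` in at most `q³ + 2q²` points, then the
characteristic vector of `π ∩ V` is a sum of at most `q + 1` distinct lines of `π`
(each with coefficient 1), or `π ∩ V` is a classical unital of `π`. -/
theorem stmt9 (p h q r : ℕ) (hp : p.Prime) (hh : 1 ≤ h) (hq : q = p ^ h) (hq4 : 4 < q)
    (hr : 3 ≤ r)
    (F : Type) [Field F] [Fintype F] (hF : Fintype.card F = q ^ 2)
    (V : Set (ProjPoint F (r + 1))) (hV : IsQuasiHermitian F q r V)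
    (hcode : charVec F p (r + 1) V ∈ hypCode F p (r + 1))
    (π : Submodule F (Fin (r + 1) → F)) (hπ : finrank F π = 3)
    (hsize : secant F (r + 1) V π ≤ q ^ 3 + 2 * q ^ 2) :
    (∃ L : Finset (Submodule F (Fin (r + 1) → F)), L.card ≤ q + 1 ∧
      (∀ ℓ ∈ L, ℓ ≤ π ∧ finrank F ℓ = 2) ∧
      charVec F p (r + 1) (V ∩ pointsIn F (r + 1) π)
        = ∑ ℓ ∈ L, charVec F p (r + 1) (pointsIn F (r + 1) ℓ)) ∨
    IsClassicalUnital F q (r + 1) π (V ∩ pointsIn F (r + 1) π) := by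
  classical
  haveI : Fact p.Prime := ⟨hp⟩
  have hcard : Fintype.card F = p ^ (h * 2) := by rw [hF, hq, pow_mul]
  haveI : CharP F p := charP_of_card_eq_prime_pow hcard
  have hpq : p ∣ q := by rw [hq]; exact dvd_pow_self p (by omega)
  have hqp : (q : ZMod p) = 0 := (ZMod.natCast_eq_zero_iff q p).2 hpq
  have hq0 : (q : F) = 0 := (CharP.cast_eq_zero_iff F p q).2 hpq
  have frob : ∀ a b : F, (a + b) ^ q = a ^ q + b ^ q := by
    intro a b; rw [hq]; exact add_pow_char_pow a b p h
  have hQ : ((Fintype.card F : ℕ) : ZMod p) = 0 := by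
    rw [hF]; push_cast; rw [hqp]; ring
  have hN1 : ((V.ncard : ℕ) : ZMod p) = 1 := QH.size_zmod (by omega) hqp hV.1
  obtain ⟨e, he, hr'⟩ := QH.exists_param π hπ
  haveI : Nonempty (ℙ F (Fin 3 → F)) :=
    ⟨Projectivization.mk F (fun _ => 1) (fun h0 => one_ne_zero (congrFun h0 0))⟩
  have hcall := QH.card_Bset_all V e he
  rw [hr'] at hcall
  have hmain := QH.comb_main (K := F) (p := p) (h := h) (q := q) hp (QH.pplane (F := F)) hF hq4 hh hq
    (QH.pcode F) QH.ind_lnp_mem QH.IB_pcode (QH.Bset V e) (QH.ind_Bset V hcode e he)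
    (by
      intro l
      rw [QH.card_Bset_line V e he l, ← ZMod.natCast_eq_natCast_iff,
        QH.secant_zmod hQ V hcode (by omega) _ (QH.finrank_map_perp e he l.rep_nonzero).ge, hN1]
      simp)
    (by
      intro l
      rw [QH.card_Bset_line V e he l, hF]
      exact QH.lemmaA hq4 hr hF hqp hp V hV hcode _ (QH.finrank_map_perp e he l.rep_nonzero))
    (by rw [hcall]; exact hsize)
  rcases hmain with ⟨hc, hl⟩ | ⟨S, hS, hsum⟩
  · right
    exact QH.final_unital hq4 hF frob hq0 V hcode π hπ e he hr' hc hl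
  · left
    exact QH.final_lines V π e he hr' S hS hsum
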